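/- arXiv:2207.05554 — 3 statements merged into one kernel-verified Lean document; each statement's English description precedes it below -/
import Mathlib

section
/- Let $G_n = a_1(n)\alpha_1^n + \cdots + a_d(n)\alpha_d^n$ and $H_m = b_1(m)\beta_1^m + \cdots + b_t(m)\beta_t^m$ be two non-degenerate linear recurrence sequences defined over a function field $F$ in one variable over $\mathbb{C}$. Assume that no $\alpha_i$ and no $\beta_j$ is contained in $\mathbb{C}$, and that for every $j \in \{1,\ldots,t\}$ the pair $(\alpha_1, \beta_j)$ is multiplicatively independent. Fix $a, b \in F^*$. Then there is an effectively computable constant $B$ such that every pair $(n,m)$ of non-negative integers with $a G_n = b H_m$ satisfies $\max\{n,m\} \le B$; in particular the equation $a G_n = b H_m$ has only finitely many solutions $(n,m)$. -/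
/-!
STATEMENT 4: Under the assumptions of Theorem 2 of the paper, the solutions
`(n, m)` of `a Gₙ = b Hₘ` are effectively bounded; in particular there are
only finitely many of them.
-/

/-- `f` lies in the field of constants `ℂ` of `F`. -/
def IsConst (F : Type*) [Field F] [Algebra ℂ F] (f : F) : Prop :=
  f ∈ Set.range (algebraMap ℂ F)

/-- `α` and `β` are multiplicatively independent: `α^r β^s ∈ ℂ` forces `r = s = 0`. -/
def MultIndep (F : Type*) [Field F] [Algebra ℂ F] (α β : F) : Prop :=
  ∀ r s : ℤ, IsConst F (α ^ r * β ^ s) → r = 0 ∧ s = 0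

/-!
The function field `F` carries a derivation `D` whose constants are exactly `ℂ`. Along the powers
of a fixed `γ`, the logarithmic derivative `n (D γ / γ)` and the values of a polynomial at `n` have
bounded height. In a relation `1 + ∑ gᵢ fᵢ = 0` with logarithmic derivatives `D fᵢ / fᵢ` and
coefficients `gᵢ` of bounded height, differentiation shows that either all the terms `gᵢ fᵢ` are
constant, or there is a second relation with which one summand can be eliminated while the
coefficients keep bounded height. Hence some `fᵢ` itself has bounded height.

A valuation that is trivial on `ℂ` takes only finitely many values on a set of bounded height.
So only finitely many powers of a nonconstant element have bounded height, and, by playing two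
valuations against each other, only finitely many quotients `β ^ m / α ^ n` do when `α` and `β` are
multiplicatively independent. Dividing `a Gₙ - b Hₘ = 0` by its `α₁`-term therefore leaves finitely
many `n`, and for each fixed `n` the same argument leaves finitely many `m`.
-/

open Polynomial
open scoped Pointwise

section Constants

variable {K F : Type*} [Field K] [Field F] [Algebra K F]

theorem derivation_eq_zero_of_isSeparable (D : Derivation K F F) {x : F} (hx : IsSeparable K x) :
    D x = 0 := by
  have h : aeval x (derivative (minpoly K x)) * D x = 0 := by
    rw [← smul_eq_mul, ← D.map_aeval, minpoly.aeval, map_zero]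
  exact (mul_eq_zero.1 h).resolve_left (Separable.aeval_derivative_ne_zero hx (minpoly.aeval K x))

theorem mem_range_of_isAlgebraic [CharZero K] {D : Derivation K F F}
    (hD : ∀ x, D x = 0 → x ∈ Set.range (algebraMap K F)) {x : F} (hx : IsAlgebraic K x) :
    x ∈ Set.range (algebraMap K F) :=
  hD x (derivation_eq_zero_of_isSeparable D (minpoly.irreducible hx.isIntegral).separable)

end Constants

section BoundedHeight

variable {K F : Type*} [Field K] [Field F] [Algebra K F]

variable (K) in
/-- The elements of `S` are quotients of elements of one finite-dimensional `K`-subspace. In a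
function field over `K` this says that the heights (degrees) of the elements of `S` are bounded. -/
def HasBoundedHeight (S : Set F) : Prop :=
  ∃ W : Submodule K F, W.FG ∧ ∀ x ∈ S, ∃ a ∈ W, ∃ b ∈ W, b ≠ 0 ∧ x = a / b

namespace HasBoundedHeight

variable {S T : Set F}

theorem mono (hST : S ⊆ T) (hT : HasBoundedHeight K T) : HasBoundedHeight K S := by
  obtain ⟨W, hW, h⟩ := hT
  exact ⟨W, hW, fun x hx ↦ h x (hST hx)⟩

theorem of_submodule {W : Submodule K F} (hW : W.FG) : HasBoundedHeight K (W : Set F) :=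
  ⟨W ⊔ K ∙ 1, hW.sup (Submodule.fg_span_singleton 1), fun x hx ↦
    ⟨x, Submodule.mem_sup_left hx, 1,
      Submodule.mem_sup_right (Submodule.mem_span_singleton_self 1), one_ne_zero, by simp⟩⟩

theorem iUnion {ι : Type*} [Finite ι] {S : ι → Set F} (hS : ∀ i, HasBoundedHeight K (S i)) :
    HasBoundedHeight K (⋃ i, S i) := by
  choose W hW h using hS
  refine ⟨⨆ i, W i, Submodule.fg_iSup W hW, fun x hx ↦ ?_⟩
  obtain ⟨i, hi⟩ := Set.mem_iUnion.1 hx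
  obtain ⟨a, ha, b, hb, hb0, rfl⟩ := h i x hi
  exact ⟨a, Submodule.mem_iSup_of_mem i ha, b, Submodule.mem_iSup_of_mem i hb, hb0, rfl⟩

theorem union (hS : HasBoundedHeight K S) (hT : HasBoundedHeight K T) :
    HasBoundedHeight K (S ∪ T) := by
  rw [Set.union_eq_iUnion]
  exact iUnion (Bool.rec hT hS)

theorem neg (hS : HasBoundedHeight K S) : HasBoundedHeight K (-S) := by
  obtain ⟨W, hW, h⟩ := hS
  refine ⟨W, hW, fun x hx ↦ ?_⟩
  obtain ⟨a, ha, b, hb, hb0, hx⟩ := h (-x) hx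
  exact ⟨-a, neg_mem ha, b, hb, hb0, by rw [neg_div, ← hx, neg_neg]⟩

theorem inv (hS : HasBoundedHeight K S) : HasBoundedHeight K S⁻¹ := by
  obtain ⟨W, hW, h⟩ := hS
  refine ⟨W, hW, fun x hx ↦ ?_⟩
  obtain ⟨a, ha, b, hb, hb0, hx⟩ := h x⁻¹ hx
  rcases eq_or_ne a 0 with rfl | ha0
  · exact ⟨0, ha, b, hb, hb0, by simpa using hx⟩
  · exact ⟨b, hb, a, ha, ha0, by rw [← inv_div, ← hx, inv_inv]⟩

theorem add (hS : HasBoundedHeight K S) (hT : HasBoundedHeight K T) :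
    HasBoundedHeight K (S + T) := by
  obtain ⟨W, hW, hS⟩ := hS
  obtain ⟨V, hV, hT⟩ := hT
  refine ⟨W * V, hW.mul hV, ?_⟩
  rintro _ ⟨x, hx, y, hy, rfl⟩
  obtain ⟨a, ha, b, hb, hb0, rfl⟩ := hS x hx
  obtain ⟨c, hc, d, hd, hd0, rfl⟩ := hT y hy
  exact ⟨a * d + b * c, add_mem (Submodule.mul_mem_mul ha hd) (Submodule.mul_mem_mul hb hc),
    b * d, Submodule.mul_mem_mul hb hd, mul_ne_zero hb0 hd0, div_add_div _ _ hb0 hd0⟩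

theorem mul (hS : HasBoundedHeight K S) (hT : HasBoundedHeight K T) :
    HasBoundedHeight K (S * T) := by
  obtain ⟨W, hW, hS⟩ := hS
  obtain ⟨V, hV, hT⟩ := hT
  refine ⟨W * V, hW.mul hV, ?_⟩
  rintro _ ⟨x, hx, y, hy, rfl⟩
  obtain ⟨a, ha, b, hb, hb0, rfl⟩ := hS x hx
  obtain ⟨c, hc, d, hd, hd0, rfl⟩ := hT y hy
  exact ⟨a * c, Submodule.mul_mem_mul ha hc, b * d, Submodule.mul_mem_mul hb hd,
    mul_ne_zero hb0 hd0, div_mul_div_comm a b c d⟩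

theorem sub (hS : HasBoundedHeight K S) (hT : HasBoundedHeight K T) :
    HasBoundedHeight K (S - T) :=
  sub_eq_add_neg S T ▸ hS.add hT.neg

theorem div (hS : HasBoundedHeight K S) (hT : HasBoundedHeight K T) :
    HasBoundedHeight K (S / T) :=
  div_eq_mul_inv S T ▸ hS.mul hT.inv

theorem image_derivation (hS : HasBoundedHeight K S) (D : Derivation K F F) :
    HasBoundedHeight K (D '' S) := by
  obtain ⟨W, hW, h⟩ := hS
  let V := W ⊔ W.map (D : F →ₗ[K] F)
  have mem_V {x : F} (hx : x ∈ W) : x ∈ V := Submodule.mem_sup_left hx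
  have derivation_mem_V {x : F} (hx : x ∈ W) : D x ∈ V :=
    Submodule.mem_sup_right (Submodule.mem_map_of_mem hx)
  refine ⟨V * V, (hW.sup (hW.map _)).mul (hW.sup (hW.map _)), ?_⟩
  rintro _ ⟨_, hx, rfl⟩
  obtain ⟨a, ha, b, hb, hb0, rfl⟩ := h _ hx
  refine ⟨b * D a - a * D b, sub_mem (Submodule.mul_mem_mul (mem_V hb) (derivation_mem_V ha))
    (Submodule.mul_mem_mul (mem_V ha) (derivation_mem_V hb)), b * b,
    Submodule.mul_mem_mul (mem_V hb) (mem_V hb), mul_ne_zero hb0 hb0, ?_⟩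
  simp only [D.leibniz_div, smul_eq_mul]
  field

theorem range_eval (A : F[X]) :
    HasBoundedHeight K (Set.range fun c : K ↦ A.eval (algebraMap K F c)) := by
  refine (of_submodule (Submodule.fg_span (R := K) A.coeffs.finite_toSet)).mono ?_
  rintro _ ⟨c, rfl⟩
  change A.eval (algebraMap K F c) ∈ _
  rw [eval_eq_sum, sum_def]
  refine Submodule.sum_mem _ fun i hi ↦ ?_
  rw [← map_pow, mul_comm, ← Algebra.smul_def]
  exact Submodule.smul_mem _ _ (Submodule.subset_span (coeff_mem_coeffs (mem_support_iff.1 hi)))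

variable (K F) in
theorem range_algebraMap : HasBoundedHeight K (Set.range (algebraMap K F)) := by
  simpa only [eval_X] using range_eval (K := K) (X : F[X])

end HasBoundedHeight

end BoundedHeight

section Elimination

variable {K F : Type*} [Field K] [Field F] [Algebra K F] {D : Derivation K F F}

theorem derivation_div_div_self {x y : F} (hx : x ≠ 0) (hy : y ≠ 0) :
    D (x / y) / (x / y) = D x / x - D y / y := by
  simp only [D.leibniz_div, smul_eq_mul]
  field

theorem derivation_pow_div_self {x : F} (hx : x ≠ 0) (n : ℕ) :
    D (x ^ n) / x ^ n = D x / x * n := by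
  cases n with
  | zero => simp
  | succ n =>
    simp only [D.leibniz_pow, smul_eq_mul, nsmul_eq_mul, Nat.add_sub_cancel]
    field

variable {ι : Type*}

theorem derivation_mul_eq {f : F} (hf : f ≠ 0) (g : F) :
    D (g * f) = (D g + g * (D f / f)) * f := by
  rw [D.leibniz, smul_eq_mul, smul_eq_mul]
  field

theorem one_add_sum_erase_eq_zero [DecidableEq ι] {s : Finset ι} {f g c : ι → F}
    (hg : 1 + ∑ i ∈ s, g i * f i = 0) (hc : ∑ i ∈ s, c i * f i = 0) {i₀ : ι}
    (hci₀ : c i₀ ≠ 0) :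
    1 + ∑ i ∈ s.erase i₀, (g i - g i₀ / c i₀ * c i) * f i = 0 := by
  have hzero : (g i₀ - g i₀ / c i₀ * c i₀) * f i₀ = 0 := by
    rw [div_mul_cancel₀ _ hci₀, sub_self, zero_mul]
  rw [Finset.sum_erase s hzero]
  simp only [sub_mul, mul_assoc, Finset.sum_sub_distrib, ← Finset.mul_sum]
  rw [hc, mul_zero, sub_zero, hg]

theorem exists_mul_mem_range_algebraMap
    (hD : ∀ x, D x = 0 → x ∈ Set.range (algebraMap K F)) {s : Finset ι} {f g : ι → F}
    (hsum : 1 + ∑ i ∈ s, g i * f i = 0) (hconst : ∀ i ∈ s, D (g i * f i) = 0) :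
    ∃ i ∈ s, g i ≠ 0 ∧ g i * f i ∈ Set.range (algebraMap K F) := by
  obtain ⟨i, hi, hgf⟩ : ∃ i ∈ s, g i * f i ≠ 0 := by
    by_contra! h
    simp [Finset.sum_eq_zero h] at hsum
  exact ⟨i, hi, left_ne_zero_of_mul hgf, hD _ (hconst i hi)⟩

theorem exists_hasBoundedHeight_mem_of_one_add_sum_eq_zero
    (hD : ∀ x, D x = 0 → x ∈ Set.range (algebraMap K F)) {L : Set F} (hL : HasBoundedHeight K L)
    (k : ℕ) {S : Set F} (hS : HasBoundedHeight K S) :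
    ∃ T, HasBoundedHeight K T ∧ ∀ (s : Finset ι) (f g : ι → F), s.card = k →
      (∀ i ∈ s, f i ≠ 0 ∧ D (f i) / f i ∈ L ∧ g i ∈ S) → 1 + ∑ i ∈ s, g i * f i = 0 →
        ∃ i ∈ s, f i ∈ T := by
  classical
  induction k generalizing S with
  | zero =>
    refine ⟨S, hS, fun s f g hs _ hsum ↦ ?_⟩
    simp [Finset.card_eq_zero.1 hs] at hsum
  | succ k ih =>
    let C := D '' S + S * L
    have hC : HasBoundedHeight K C := (hS.image_derivation D).add (hS.mul hL)
    obtain ⟨T, hT, hTmem⟩ := ih (hS.sub ((hS.div hC).mul hC))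
    refine ⟨Set.range (algebraMap K F) / S ∪ T,
      ((HasBoundedHeight.range_algebraMap K F).div hS).union hT, fun s f g hs hfg hsum ↦ ?_⟩
    let c : ι → F := fun i ↦ D (g i) + g i * (D (f i) / f i)
    have hcC : ∀ i ∈ s, c i ∈ C := fun i hi ↦
      Set.add_mem_add (Set.mem_image_of_mem D (hfg i hi).2.2)
        (Set.mul_mem_mul (hfg i hi).2.2 (hfg i hi).2.1)
    have hDgf : ∀ i ∈ s, D (g i * f i) = c i * f i := fun i hi ↦
      derivation_mul_eq (hfg i hi).1 (g i)
    by_cases! hc : ∀ i ∈ s, c i = 0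
    · obtain ⟨i, hi, hgi, hconst⟩ := exists_mul_mem_range_algebraMap hD hsum fun i hi ↦
        (hDgf i hi).trans (by rw [hc i hi, zero_mul])
      exact ⟨i, hi, .inl ⟨_, hconst, _, (hfg i hi).2.2, mul_div_cancel_left₀ _ hgi⟩⟩
    · obtain ⟨i₀, hi₀, hci₀⟩ := hc
      have hcsum : ∑ i ∈ s, c i * f i = 0 := by
        rw [← Finset.sum_congr rfl hDgf, ← map_sum, eq_neg_of_add_eq_zero_right hsum, map_neg,
          D.map_one_eq_zero, neg_zero]
      obtain ⟨i, hi, hfi⟩ := hTmem (s.erase i₀) f _ (by rw [Finset.card_erase_of_mem hi₀, hs]; rfl)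
        (fun i hi ↦ have hi := Finset.mem_of_mem_erase hi
          ⟨(hfg i hi).1, (hfg i hi).2.1, Set.sub_mem_sub (hfg i hi).2.2 <|
            Set.mul_mem_mul (Set.div_mem_div (hfg i₀ hi₀).2.2 (hcC i₀ hi₀)) (hcC i hi)⟩)
        (one_add_sum_erase_eq_zero hsum hcsum hci₀)
      exact ⟨i, Finset.mem_of_mem_erase hi, .inr hfi⟩

theorem exists_hasBoundedHeight_div_mem_of_sum_eq_zero [Fintype ι]
    (hD : ∀ x, D x = 0 → x ∈ Set.range (algebraMap K F)) {L S : Set F}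
    (hL : HasBoundedHeight K L) (hS : HasBoundedHeight K S) :
    ∃ T, HasBoundedHeight K T ∧ ∀ f g : ι → F,
      (∀ i, f i ≠ 0 ∧ D (f i) / f i ∈ L ∧ g i ∈ S) → ∑ i, g i * f i = 0 →
        ∀ i₀, g i₀ ≠ 0 → ∃ i ≠ i₀, f i / f i₀ ∈ T := by
  classical
  obtain ⟨T, hT, hTmem⟩ := exists_hasBoundedHeight_mem_of_one_add_sum_eq_zero (ι := ι) hD
    (hL.sub hL) (Fintype.card ι - 1) (hS.div hS)
  refine ⟨T, hT, fun f g hfg hsum i₀ hgi₀ ↦ ?_⟩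
  have hf i : f i ≠ 0 := (hfg i).1
  have hsum' : 1 + ∑ i ∈ Finset.univ.erase i₀, g i / g i₀ * (f i / f i₀) = 0 := by
    have hone : g i₀ / g i₀ * (f i₀ / f i₀) = 1 := by
      rw [div_self hgi₀, div_self (hf i₀), one_mul]
    rw [← hone, Finset.add_sum_erase _ (fun i ↦ g i / g i₀ * (f i / f i₀)) (Finset.mem_univ i₀)]
    simp only [div_mul_div_comm, ← Finset.sum_div, hsum, zero_div]
  obtain ⟨i, hi, hmem⟩ := hTmem _ (fun i ↦ f i / f i₀) _ (by simp) (fun i _ ↦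
    ⟨div_ne_zero (hf i) (hf i₀), derivation_div_div_self (D := D) (hf i) (hf i₀) ▸
      Set.sub_mem_sub (hfg i).2.1 (hfg i₀).2.1, Set.div_mem_div (hfg i).2.2 (hfg i₀).2.2⟩) hsum'
  exact ⟨i, Finset.ne_of_mem_erase hi, hmem⟩

theorem exists_hasBoundedHeight_pow_div_pow_mem [Fintype ι]
    (hD : ∀ x, D x = 0 → x ∈ Set.range (algebraMap K F)) {γ : ι → F} (hγ : ∀ i, γ i ≠ 0)
    (A : ι → F[X]) :
    ∃ T, HasBoundedHeight K T ∧ ∀ n : ι → ℕ, ∑ i, (A i).eval (n i : F) * γ i ^ n i = 0 →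
      ∀ i₀, (A i₀).eval (n i₀ : F) ≠ 0 → ∃ i ≠ i₀, γ i ^ n i / γ i₀ ^ n i₀ ∈ T := by
  have hbdd (P : ι → F[X]) :=
    HasBoundedHeight.iUnion fun i ↦ HasBoundedHeight.range_eval (K := K) (P i)
  have mem_range (P : ι → F[X]) (i : ι) (n : ℕ) :
      (P i).eval (n : F) ∈ ⋃ i, Set.range fun c : K ↦ (P i).eval (algebraMap K F c) :=
    Set.mem_iUnion.2 ⟨i, n, congrArg (P i).eval (map_natCast (algebraMap K F) n)⟩
  obtain ⟨T, hT, hTmem⟩ := exists_hasBoundedHeight_div_mem_of_sum_eq_zero (ι := ι) hD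
    (hbdd fun i ↦ C (D (γ i) / γ i) * X) (hbdd A)
  refine ⟨T, hT, fun n hsum ↦ hTmem (fun i ↦ γ i ^ n i) (fun i ↦ (A i).eval (n i : F))
    (fun i ↦ ⟨pow_ne_zero _ (hγ i), ?_, mem_range A i (n i)⟩) hsum⟩
  have hlog := mem_range (fun i ↦ C (D (γ i) / γ i) * X) i (n i)
  rwa [eval_C_mul, eval_X, ← derivation_pow_div_self (hγ i)] at hlog

end Elimination

section Valuation

variable {K F Γ : Type*} [Field K] [Field F] [Algebra K F] [LinearOrderedCommGroupWithZero Γ]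

theorem linearIndependent_of_injective_valuation (v : Valuation F Γ) [v.IsTrivialOn K] {ι : Type*}
    {w : ι → F} (hw : ∀ i, w i ≠ 0) (hv : Function.Injective fun i ↦ v (w i)) :
    LinearIndependent K w := by
  classical
  refine linearIndependent_iff.2 fun l hl ↦ ?_
  by_contra hl0
  obtain ⟨i, hi, hmax⟩ := l.support.exists_max_image (fun i ↦ v (w i))
    (Finsupp.support_nonempty_iff.2 hl0)
  have hterm : ∀ j ∈ l.support, v (l j • w j) = v (w j) := fun j hj ↦ by
    rw [Algebra.smul_def, map_mul, Valuation.IsTrivialOn.eq_one _ (Finsupp.mem_support_iff.1 hj),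
      one_mul]
  have hsum : v (∑ j ∈ l.support, l j • w j) = v (w i) := by
    rw [← hterm i hi]
    refine v.map_sum_eq_of_lt hi fun j hj ↦ ?_
    obtain ⟨hj, hji⟩ := Finset.mem_sdiff.1 hj
    rw [hterm i hi, hterm j hj]
    exact (hmax j hj).lt_of_ne fun h ↦ hji (Finset.mem_singleton.2 (hv h))
  rw [Finsupp.linearCombination_apply, Finsupp.sum] at hl
  rw [hl, map_zero] at hsum
  exact hw i ((v.zero_iff).1 hsum.symm)

theorem finite_image_valuation_of_fg (v : Valuation F Γ) [v.IsTrivialOn K] {W : Submodule K F}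
    (hW : W.FG) : (v '' W).Finite := by
  have : Module.Finite K W := Module.Finite.iff_fg.2 hW
  choose w hw hvw using fun c : ↥(v '' W \ {0}) ↦ c.2.1
  have hindep : LinearIndependent K w :=
    linearIndependent_of_injective_valuation v (fun c h ↦ c.2.2 (by simp [← hvw c, h]))
      (by simpa only [hvw] using Subtype.val_injective)
  have hindepW : LinearIndependent K fun c ↦ (⟨w c, hw c⟩ : W) :=
    LinearIndependent.of_comp W.subtype hindep
  have : Finite ↥(v '' W \ {0}) := hindepW.finite
  exact (Set.toFinite (v '' W \ {0})).of_sdiff (Set.finite_singleton 0)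

theorem HasBoundedHeight.finite_image_valuation {S : Set F} (hS : HasBoundedHeight K S)
    (v : Valuation F Γ) [v.IsTrivialOn K] : (v '' S).Finite := by
  obtain ⟨W, hW, h⟩ := hS
  have hfin := finite_image_valuation_of_fg v hW
  refine (hfin.div hfin).subset ?_
  rintro _ ⟨_, hx, rfl⟩
  obtain ⟨a, ha, b, hb, -, rfl⟩ := h _ hx
  exact ⟨_, Set.mem_image_of_mem v ha, _, Set.mem_image_of_mem v hb, (map_div₀ v a b).symm⟩

theorem exists_one_lt_valuation_of_transcendental {x : F} (hx : Transcendental K x) :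
    ∃ V : ValuationSubring F, V.valuation.IsTrivialOn K ∧ 1 < V.valuation x := by
  obtain ⟨V, hKV, hxV⟩ := Subring.exists_le_valuationSubring_of_isIntegrallyClosedIn
    (R := (integralClosure K F).toSubring) (x := x) fun h ↦ hx h.isAlgebraic
  have hle (c : K) : V.valuation (algebraMap K F c) ≤ 1 :=
    (V.valuation_le_one_iff _).2 (hKV (algebraMap_mem (integralClosure K F) c))
  exact ⟨V, .of_le_one _ hle, not_le.1 (mt (V.valuation_le_one_iff x).1 hxV)⟩

theorem HasBoundedHeight.finite_setOf_pow_mem {S : Set F} (hS : HasBoundedHeight K S) {x : F}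
    (hx : Transcendental K x) : {n : ℕ | x ^ n ∈ S}.Finite := by
  obtain ⟨V, hVK, hVx⟩ := exists_one_lt_valuation_of_transcendental hx
  refine Set.Finite.of_finite_image (f := fun n ↦ V.valuation x ^ n)
    ((hS.finite_image_valuation V.valuation).subset ?_)
    (pow_right_injective₀ (zero_lt_one.trans hVx) hVx.ne').injOn
  rintro _ ⟨n, hn, rfl⟩
  exact ⟨x ^ n, hn, map_pow _ _ _⟩

theorem mul_eq_mul_of_zpow_mul_zpow_eq_one {a b : Γ} (ha : 1 < a) {r s r' s' : ℤ}
    (h : a ^ r * b ^ s = 1) (h' : a ^ r' * b ^ s' = 1) : r * s' = r' * s := by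
  refine zpow_right_injective₀ (zero_lt_one.trans ha) ha.ne' ?_
  change a ^ (r * s') = a ^ (r' * s)
  rw [zpow_mul, zpow_mul, eq_inv_of_mul_eq_one_left h, eq_inv_of_mul_eq_one_left h', ← zpow_neg,
    ← zpow_neg, ← zpow_mul, ← zpow_mul, neg_mul, neg_mul, mul_comm]

theorem exists_valuation_pair {x y : F}
    (h : ∀ r s : ℤ, IsAlgebraic K (x ^ r * y ^ s) → r = 0 ∧ s = 0) :
    ∃ V V' : ValuationSubring F, V.valuation.IsTrivialOn K ∧ V'.valuation.IsTrivialOn K ∧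
      ∀ r s : ℤ, V.valuation (x ^ r * y ^ s) = 1 → V'.valuation (x ^ r * y ^ s) = 1 →
        r = 0 ∧ s = 0 := by
  have hx : Transcendental K x := fun hx ↦ one_ne_zero (h 1 0 (by simpa using hx)).1
  obtain ⟨V, hVK, hVx⟩ := exists_one_lt_valuation_of_transcendental hx
  by_cases! hV : ∀ r s : ℤ, V.valuation (x ^ r * y ^ s) = 1 → r = 0 ∧ s = 0
  · exact ⟨V, V, hVK, hVK, fun r s hrs _ ↦ hV r s hrs⟩
  obtain ⟨r₀, s₀, hV₀, hne₀⟩ := hV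
  have htr : Transcendental K (x ^ r₀ * y ^ s₀) := fun halg ↦
    hne₀ (h r₀ s₀ halg).1 (h r₀ s₀ halg).2
  obtain ⟨V', hVK', hVx'⟩ := exists_one_lt_valuation_of_transcendental htr
  have zpow_eq_one {U : ValuationSubring F} {z : F} (hz : 1 < U.valuation z) {n : ℤ}
      (hn : U.valuation z ^ n = 1) : n = 0 :=
    (zpow_eq_one_iff_right₀ zero_le hz.ne').1 hn
  have hs₀ : s₀ ≠ 0 := by
    rintro rfl
    exact hne₀ (zpow_eq_one hVx (by simpa using hV₀)) rfl
  refine ⟨V, V', hVK, hVK', fun r s hr hr' ↦ ?_⟩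
  have hdet : r * s₀ = r₀ * s := by
    rw [map_mul, map_zpow₀, map_zpow₀] at hr hV₀
    exact mul_eq_mul_of_zpow_mul_zpow_eq_one hVx hr hV₀
  have hpow : (x ^ r * y ^ s) ^ s₀ = (x ^ r₀ * y ^ s₀) ^ s := by
    rw [mul_zpow, mul_zpow, ← zpow_mul, ← zpow_mul, ← zpow_mul, ← zpow_mul, hdet, mul_comm s]
  have hs : s = 0 := zpow_eq_one hVx' (by rw [← map_zpow₀, ← hpow, map_zpow₀, hr', one_zpow])
  have hr : r * s₀ = 0 := by rw [hdet, hs, mul_zero]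
  exact ⟨(mul_eq_zero.1 hr).resolve_right hs₀, hs⟩

theorem HasBoundedHeight.finite_setOf_pow_div_pow_mem {S : Set F} (hS : HasBoundedHeight K S)
    {x y : F} (h : ∀ r s : ℤ, IsAlgebraic K (x ^ r * y ^ s) → r = 0 ∧ s = 0) :
    {p : ℕ × ℕ | y ^ p.2 / x ^ p.1 ∈ S}.Finite := by
  obtain ⟨V, V', hVK, hVK', hVV'⟩ := exists_valuation_pair h
  have hx : x ≠ 0 := by
    rintro rfl
    exact one_ne_zero (h 1 0 (by simpa using isAlgebraic_zero)).1
  have hy : y ≠ 0 := by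
    rintro rfl
    exact one_ne_zero (h 0 1 (by simpa using isAlgebraic_zero)).2
  refine Set.Finite.of_finite_image (f := fun p : ℕ × ℕ ↦
    (V.valuation (y ^ p.2 / x ^ p.1), V'.valuation (y ^ p.2 / x ^ p.1)))
    (((hS.finite_image_valuation V.valuation).prod
      (hS.finite_image_valuation V'.valuation)).subset ?_) ?_
  · rintro _ ⟨p, hp, rfl⟩
    exact ⟨Set.mem_image_of_mem _ hp, Set.mem_image_of_mem _ hp⟩
  · rintro ⟨n, m⟩ - ⟨n', m'⟩ - heq
    obtain ⟨hV, hV'⟩ := Prod.mk.inj heq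
    have hquot : x ^ ((n' : ℤ) - n) * y ^ ((m : ℤ) - m') = y ^ m / x ^ n / (y ^ m' / x ^ n') := by
      rw [zpow_sub₀ hx, zpow_sub₀ hy]
      simp only [zpow_natCast]
      field
    have hne : y ^ m' / x ^ n' ≠ 0 := div_ne_zero (pow_ne_zero _ hy) (pow_ne_zero _ hx)
    have valuation_eq_one {U : ValuationSubring F}
        (hU : U.valuation (y ^ m / x ^ n) = U.valuation (y ^ m' / x ^ n')) :
        U.valuation (x ^ ((n' : ℤ) - n) * y ^ ((m : ℤ) - m')) = 1 := by
      rw [hquot, map_div₀, hU, div_self ((U.valuation.ne_zero_iff).2 hne)]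
    obtain ⟨hn, hm⟩ := hVV' _ _ (valuation_eq_one hV) (valuation_eq_one hV')
    exact Prod.ext (by lia) (by lia)

end Valuation

section Recurrence

variable {K F : Type*} [Field K] [CharZero K] [Field F] [Algebra K F] {D : Derivation K F F}
  {ι κ : Type*} [Fintype ι] [Fintype κ]

theorem finite_setOf_eval_natCast_eq_zero {R : Type*} [CommRing R] [IsDomain R] [CharZero R]
    {p : R[X]} (hp : p ≠ 0) : {n : ℕ | p.eval (n : R) = 0}.Finite :=
  (finite_setOfPred_isRoot hp).preimage Nat.cast_injective.injOn

theorem finite_setOf_sum_eval_mul_pow_eq_zero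
    (hD : ∀ x, D x = 0 → x ∈ Set.range (algebraMap K F)) {γ : ι → F} (hγ : ∀ i, γ i ≠ 0)
    {A : ι → F[X]} {i₀ : ι} (hA : A i₀ ≠ 0)
    (hratio : ∀ i ≠ i₀, γ i / γ i₀ ∉ Set.range (algebraMap K F)) :
    {n : ℕ | ∑ i, (A i).eval (n : F) * γ i ^ n = 0}.Finite := by
  have : CharZero F := charZero_of_injective_algebraMap (algebraMap K F).injective
  obtain ⟨T, hT, hTmem⟩ := exists_hasBoundedHeight_pow_div_pow_mem hD hγ A
  refine ((finite_setOf_eval_natCast_eq_zero hA).union <|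
    (Set.toFinite {i | i ≠ i₀}).biUnion fun i hi ↦
      hT.finite_setOf_pow_mem (mt (mem_range_of_isAlgebraic hD) (hratio i hi))).subset fun n hn ↦ ?_
  refine or_iff_not_imp_left.2 fun hAn ↦ ?_
  obtain ⟨i, hi, hmem⟩ := hTmem (fun _ ↦ n) hn i₀ hAn
  exact Set.mem_biUnion hi (by rwa [← div_pow] at hmem)

theorem finite_setOf_sum_eval_mul_pow_eq
    (hD : ∀ x, D x = 0 → x ∈ Set.range (algebraMap K F)) {γ : ι → F} (hγ : ∀ i, γ i ≠ 0)
    {A : ι → F[X]} {i₀ : ι} (hA : A i₀ ≠ 0) (hγi₀ : γ i₀ ∉ Set.range (algebraMap K F))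
    (hratio : ∀ i ≠ i₀, γ i / γ i₀ ∉ Set.range (algebraMap K F)) (c : F) :
    {n : ℕ | ∑ i, (A i).eval (n : F) * γ i ^ n = c}.Finite := by
  have hratio' : ∀ i ≠ some i₀, i.elim 1 γ / γ i₀ ∉ Set.range (algebraMap K F) := by
    rintro (_ | i) hi
    · rintro ⟨z, hz⟩
      exact hγi₀ ⟨z⁻¹, by rw [map_inv₀, hz, Option.elim_none, one_div, inv_inv]⟩
    · exact hratio i fun h ↦ hi (congrArg some h)
  refine (finite_setOf_sum_eval_mul_pow_eq_zero hD (γ := fun i : Option ι ↦ i.elim 1 γ)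
    (A := fun i ↦ i.elim (C (-c)) A) (i₀ := some i₀) (Option.rec one_ne_zero hγ) hA
    hratio').subset fun n hn ↦ ?_
  have hn : ∑ i, (A i).eval (n : F) * γ i ^ n = c := hn
  simp [Fintype.sum_option, hn]

theorem finite_setOf_exists_sum_eval_mul_pow_eq
    (hD : ∀ x, D x = 0 → x ∈ Set.range (algebraMap K F)) {α : ι → F} {A : ι → F[X]}
    {β : κ → F} {B : κ → F[X]} (hα : ∀ i, α i ≠ 0) (hβ : ∀ j, β j ≠ 0) {i₀ : ι} (hA : A i₀ ≠ 0)
    (hratio : ∀ i ≠ i₀, α i / α i₀ ∉ Set.range (algebraMap K F))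
    (hindep : ∀ j, ∀ r s : ℤ, α i₀ ^ r * β j ^ s ∈ Set.range (algebraMap K F) → r = 0 ∧ s = 0) :
    {n : ℕ | ∃ m : ℕ, ∑ i, (A i).eval (n : F) * α i ^ n =
      ∑ j, (B j).eval (m : F) * β j ^ m}.Finite := by
  have : CharZero F := charZero_of_injective_algebraMap (algebraMap K F).injective
  obtain ⟨T, hT, hTmem⟩ := exists_hasBoundedHeight_pow_div_pow_mem hD
    (γ := Sum.elim α β) (Sum.rec hα hβ) (Sum.elim A (-B))
  have hfinα : (⋃ i ∈ {i | i ≠ i₀}, {n : ℕ | (α i / α i₀) ^ n ∈ T}).Finite :=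
    (Set.toFinite _).biUnion fun i hi ↦
      hT.finite_setOf_pow_mem (mt (mem_range_of_isAlgebraic hD) (hratio i hi))
  have hfinβ : (⋃ j, {p : ℕ × ℕ | β j ^ p.2 / α i₀ ^ p.1 ∈ T}).Finite :=
    Set.finite_iUnion fun j ↦ hT.finite_setOf_pow_div_pow_mem fun r s hrs ↦
      hindep j r s (mem_range_of_isAlgebraic hD hrs)
  refine (((finite_setOf_eval_natCast_eq_zero hA).union hfinα).union
    (hfinβ.image Prod.fst)).subset ?_
  rintro n ⟨m, hnm⟩
  refine or_iff_not_imp_left.2 fun hn ↦ ?_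
  obtain ⟨hAn, hnα⟩ := not_or.1 hn
  obtain ⟨i | j, hi, hmem⟩ := hTmem (Sum.elim (fun _ ↦ n) fun _ ↦ m)
    (by simp [hnm]) (.inl i₀) hAn
  · have hmem : (α i / α i₀) ^ n ∈ T := by rwa [div_pow]
    have hi : i ∈ {i | i ≠ i₀} := fun h ↦ hi (congrArg Sum.inl h)
    exact absurd (Set.mem_biUnion hi hmem) hnα
  · exact ⟨(n, m), Set.mem_iUnion.2 ⟨j, hmem⟩, rfl⟩

theorem finite_setOf_sum_eval_mul_pow_eq_sum
    (hD : ∀ x, D x = 0 → x ∈ Set.range (algebraMap K F)) {α : ι → F} {A : ι → F[X]}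
    {β : κ → F} {B : κ → F[X]} (hα : ∀ i, α i ≠ 0) (hβ : ∀ j, β j ≠ 0) {i₀ : ι} {j₀ : κ}
    (hA : A i₀ ≠ 0) (hB : B j₀ ≠ 0)
    (hratioα : ∀ i ≠ i₀, α i / α i₀ ∉ Set.range (algebraMap K F))
    (hratioβ : ∀ j ≠ j₀, β j / β j₀ ∉ Set.range (algebraMap K F))
    (hindep : ∀ j, ∀ r s : ℤ, α i₀ ^ r * β j ^ s ∈ Set.range (algebraMap K F) → r = 0 ∧ s = 0) :
    {p : ℕ × ℕ | ∑ i, (A i).eval (p.1 : F) * α i ^ p.1 =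
      ∑ j, (B j).eval (p.2 : F) * β j ^ p.2}.Finite := by
  have hβj₀ : β j₀ ∉ Set.range (algebraMap K F) := fun h ↦
    one_ne_zero (hindep j₀ 0 1 (by simpa using h)).2
  have hfst := finite_setOf_exists_sum_eval_mul_pow_eq (B := B) hD hα hβ hA hratioα hindep
  have hsnd (n : ℕ) := finite_setOf_sum_eval_mul_pow_eq hD hβ hB hβj₀ hratioβ
    (∑ i, (A i).eval (n : F) * α i ^ n)
  refine (hfst.biUnion fun n _ ↦ (hsnd n).image (Prod.mk n)).subset fun ⟨n, m⟩ hp ↦ ?_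
  exact Set.mem_biUnion (show n ∈ _ from ⟨m, hp⟩) (Set.mem_image_of_mem _ hp.symm)

theorem stmt_4_general
    (hD : ∀ x, D x = 0 → x ∈ Set.range (algebraMap K F))
    {α : ι → F} {A : ι → F[X]} {β : κ → F} {B : κ → F[X]}
    (hα : ∀ i, α i ≠ 0) (hβ : ∀ j, β j ≠ 0) {i₀ : ι} {j₀ : κ} (hA : A i₀ ≠ 0) (hB : B j₀ ≠ 0)
    (hratioα : ∀ i ≠ i₀, α i / α i₀ ∉ Set.range (algebraMap K F))
    (hratioβ : ∀ j ≠ j₀, β j / β j₀ ∉ Set.range (algebraMap K F))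
    (hindep : ∀ j, ∀ r s : ℤ, α i₀ ^ r * β j ^ s ∈ Set.range (algebraMap K F) → r = 0 ∧ s = 0)
    {a b : F} (ha : a ≠ 0) (hb : b ≠ 0) {G H : ℕ → F}
    (hG : ∀ n : ℕ, G n = ∑ i, (A i).eval (n : F) * α i ^ n)
    (hH : ∀ m : ℕ, H m = ∑ j, (B j).eval (m : F) * β j ^ m) :
    ∃ B' : ℕ, (∀ n m : ℕ, a * G n = b * H m → max n m ≤ B') ∧
      {p : ℕ × ℕ | a * G p.1 = b * H p.2}.Finite := by
  have hfin : {p : ℕ × ℕ | a * G p.1 = b * H p.2}.Finite := by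
    simpa only [hG, hH, eval_C_mul, mul_assoc, ← Finset.mul_sum] using
      finite_setOf_sum_eval_mul_pow_eq_sum (A := fun i ↦ C a * A i) (B := fun j ↦ C b * B j) hD
        hα hβ (mul_ne_zero (C_ne_zero.2 ha) hA) (mul_ne_zero (C_ne_zero.2 hb) hB) hratioα hratioβ
        hindep
  obtain ⟨B', hB'⟩ := (hfin.image fun p ↦ max p.1 p.2).bddAbove
  exact ⟨B', fun n m h ↦ hB' (Set.mem_image_of_mem _ (show (n, m) ∈ _ from h)), hfin⟩

end Recurrence

section FunctionField

variable {K F : Type*} [Field K] [Field F] [Algebra K F]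

/-- The field of constants of a derivation. -/
def constantField (D : Derivation K F F) : IntermediateField K F where
  carrier := {x | D x = 0}
  mul_mem' ha hb := by simp_all
  add_mem' ha hb := by simp_all
  algebraMap_mem' := by simp
  inv_mem' a ha := by simp_all [Derivation.leibniz_inv]

/-- A derivation, regarded as linear over its field of constants. -/
def overConstantField (D : Derivation K F F) : Derivation (constantField D) F F :=
  Derivation.mk'
    { toFun := D
      map_add' := map_add D
      map_smul' c x := by
        have hc : D c = 0 := c.2
        simp [Algebra.smul_def, hc] }
    D.leibniz

theorem isAlgebraic_constantField [CharZero K] (htr : Algebra.trdeg K F ≤ 1)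
    {D : Derivation K F F} (hD : D ≠ 0) : Algebra.IsAlgebraic K (constantField D) := by
  have : CharZero (constantField D) :=
    charZero_of_injective_algebraMap (algebraMap K (constantField D)).injective
  obtain ⟨t, ht⟩ : ∃ t, D t ≠ 0 := by
    contrapose! hD
    exact Derivation.ext hD
  have : Algebra.Transcendental (constantField D) F := ⟨t, fun h ↦ ht <|
    derivation_eq_zero_of_isSeparable (overConstantField D)
      (minpoly.irreducible h.isIntegral).separable⟩
  have hpos : 1 ≤ Algebra.trdeg (constantField D) F :=
    Cardinal.one_le_iff_pos.2 (trdeg_pos _ _)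
  rw [← trdeg_eq_zero_iff]
  by_contra hne
  have htwo : (1 : Cardinal) + 1 ≤ 1 :=
    (add_le_add (Cardinal.one_le_iff_ne_zero.2 hne) hpos).trans
      ((trdeg_add_eq K (constantField D)).trans_le htr)
  norm_cast at htwo

open scoped TensorProduct in
theorem exists_derivation_extending (R : Type*) {A B : Type*} [CommRing R] [CommRing A]
    [CommRing B] [Algebra R A] [Algebra A B] [Algebra R B] [IsScalarTower R A B]
    [Algebra.FormallyEtale A B] (D : Derivation R A A) :
    ∃ D' : Derivation R B B, ∀ x, D' (algebraMap A B x) = algebraMap A B (D x) := by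
  let e := KaehlerDifferential.tensorKaehlerEquivOfFormallyEtale R A B
  let φ : B ⊗[A] Ω[A⁄R] →ₗ[B] B :=
    LinearMap.liftBaseChange B (Algebra.linearMap A B ∘ₗ D.liftKaehlerDifferential)
  refine ⟨(φ ∘ₗ e.symm.toLinearMap).compDer (KaehlerDifferential.D R B), fun x ↦ ?_⟩
  change φ (e.symm (KaehlerDifferential.D R B (algebraMap A B x))) = _
  rw [KaehlerDifferential.tensorKaehlerEquivOfFormallyEtale_symm_D_algebraMap]
  simp [φ]

variable (K F) in
theorem trdeg_eq_one_of_isAlgebraic_ratFunc [Algebra (RatFunc K) F]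
    [IsScalarTower K (RatFunc K) F] [Algebra.IsAlgebraic (RatFunc K) F] :
    Algebra.trdeg K F = 1 := by
  have : Algebra.IsAlgebraic K[X] (RatFunc K) := IsLocalization.isAlgebraic _ (nonZeroDivisors K[X])
  have h : Algebra.trdeg K (RatFunc K) = 1 := by
    rw [← trdeg_add_eq K K[X], Polynomial.trdeg_of_isDomain, trdeg_eq_zero, add_zero]
  have hadd := lift_trdeg_add_eq K (RatFunc K) F
  rw [h, trdeg_eq_zero (R := RatFunc K), Cardinal.lift_one, Cardinal.lift_zero, add_zero,
    eq_comm, Cardinal.lift_eq_one] at hadd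
  exact hadd

variable (K F) in
theorem exists_derivation_constants_eq [IsAlgClosed K] [CharZero K] [Algebra (RatFunc K) F]
    [IsScalarTower K (RatFunc K) F] [Algebra.IsAlgebraic (RatFunc K) F] :
    ∃ D : Derivation K F F, ∀ x, D x = 0 → x ∈ Set.range (algebraMap K F) := by
  have : Algebra.FormallyEtale K[X] (RatFunc K) :=
    Algebra.FormallyEtale.of_isLocalization (nonZeroDivisors K[X])
  have : Algebra.FormallyEtale (RatFunc K) F := Algebra.FormallyEtale.of_isSeparable _ _
  obtain ⟨D₁, hD₁⟩ := exists_derivation_extending (B := RatFunc K) K (derivative' (R := K))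
  obtain ⟨D, hD⟩ := exists_derivation_extending (B := F) K D₁
  have hD0 : D ≠ 0 := by
    rintro rfl
    have h := hD (algebraMap K[X] (RatFunc K) X)
    rw [hD₁] at h
    simp [derivative'] at h
  have := isAlgebraic_constantField (trdeg_eq_one_of_isAlgebraic_ratFunc K F).le hD0
  have hbot := (constantField D).eq_bot_of_isAlgClosed_of_isAlgebraic
  exact ⟨D, fun x hx ↦ IntermediateField.mem_bot.1 (hbot ▸ (hx : x ∈ constantField D))⟩

end FunctionField

theorem stmt_4
    (F : Type*) [Field F] [Algebra ℂ F] [Algebra (RatFunc ℂ) F]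
    [IsScalarTower ℂ (RatFunc ℂ) F] (hFF : FunctionField ℂ F)
    (d t : ℕ)
    -- the data of the two linear recurrence sequences
    (α : Fin (d + 1) → F) (A : Fin (d + 1) → Polynomial F)
    (β : Fin (t + 1) → F) (B : Fin (t + 1) → Polynomial F)
    (hα0 : ∀ i, α i ≠ 0) (hA0 : ∀ i, A i ≠ 0)
    (hβ0 : ∀ j, β j ≠ 0) (hB0 : ∀ j, B j ≠ 0)
    (hαinj : Function.Injective α) (hβinj : Function.Injective β)
    -- non-degeneracy
    (hGnd : ∀ i j, i ≠ j → ¬ IsConst F (α i / α j))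
    (hHnd : ∀ i j, i ≠ j → ¬ IsConst F (β i / β j))
    -- no `αᵢ` and no `βⱼ` lies in `ℂ`
    (hα1 : ∀ i, ¬ IsConst F (α i)) (hβ1 : ∀ j, ¬ IsConst F (β j))
    -- `(α₁, βⱼ)` multiplicatively independent for all `j`
    (hindep : ∀ j, MultIndep F (α 0) (β j))
    (a b : F) (ha : a ≠ 0) (hb : b ≠ 0)
    (G H : ℕ → F)
    (hG : ∀ n : ℕ, G n = ∑ i, (A i).eval (n : F) * α i ^ n)
    (hH : ∀ m : ℕ, H m = ∑ j, (B j).eval (m : F) * β j ^ m) :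
    ∃ B' : ℕ, (∀ n m : ℕ, a * G n = b * H m → max n m ≤ B') ∧
      {p : ℕ × ℕ | a * G p.1 = b * H p.2}.Finite := by
  have : FiniteDimensional (RatFunc ℂ) F := hFF
  obtain ⟨D, hD⟩ := exists_derivation_constants_eq ℂ F
  exact stmt_4_general hD hα0 hβ0 (hA0 0) (hB0 0) (fun i hi ↦ hGnd i 0 hi)
    (fun j hj ↦ hHnd j 0 hj) hindep ha hb hG hH
end

section
/- Let $(G_n)_{n=0}^\infty$ be a non-degenerate linear recurrence sequence taking values in a function field $F$ in one variable over $\mathbb{C}$, with power sum representation $G_n = a_1(n)\alpha_1^n + \cdots + a_t(n)\alpha_t^n$, let $L = F(\alpha_1, \ldots, \alpha_t)$ be the splitting field of its characteristic polynomial, and let $\mu$ be a valuation on $L$. Then there are effectively computable constants $C^+$ and $C^-$, independent of $n$, such that for every sufficiently large $n$ one has $C^- + n \cdot \min_{j=1,\ldots,t} \mu(\alpha_j) \le \mu(G_n) \le C^+ + n \cdot \min_{j=1,\ldots,t} \mu(\alpha_j)$. -/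
/-!
STATEMENT 8: Growth of a non-degenerate linear recurrence sequence over a
function field: `C⁻ + n · min_j μ(αⱼ) ≤ μ(Gₙ) ≤ C⁺ + n · min_j μ(αⱼ)` for all
sufficiently large `n`, where `μ` is a valuation on the splitting field
`L = F(α₁, …, α_t)`.
-/

/-- A (normalized discrete) valuation on a function field `F` over `ℂ`. -/
structure FFValuation (F : Type*) [Field F] [Algebra ℂ F] where
  v : F → WithTop ℤ
  v_zero : v 0 = ⊤
  v_ne_top : ∀ f : F, f ≠ 0 → v f ≠ ⊤
  v_mul : ∀ f g : F, v (f * g) = v f + v g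
  v_add : ∀ f g : F, min (v f) (v g) ≤ v (f + g)
  v_const : ∀ c : ℂ, c ≠ 0 → v (algebraMap ℂ F c) = 0
  v_exists_one : ∃ f : F, v f = 1

/-!
Over an algebraically closed field `k` of characteristic zero, the residue field at a place of a
function field `L` is `k`, so expansion in a uniformizer embeds `L` into `k((X))` compatibly with
the valuations. There the Euler operator `θ = X · d/dX` never decreases the valuation and kills
only the constants, so non-degeneracy says that the logarithmic derivatives `θαⱼ / αⱼ` are
distinct. Since `θ(aⱼ(n) αⱼⁿ) = ãⱼ(n) αⱼⁿ` for some polynomial `ãⱼ`, applying `aⱼ(n) θ - ãⱼ(n)` to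
`Gₙ` removes the root `αⱼ`, keeps the other coefficients nonzero, and lowers the valuation by at
most a constant, independent of `n`. What finally remains is one term `b(n) αᵢⁿ`, with `i` chosen
to minimize `μ(αᵢ)`; Lagrange interpolation bounds `μ(b(n))` from above for all but finitely many
`n`. The lower bound is the ultrametric inequality.
-/

open Polynomial Filter
open scoped Differential LaurentSeries PowerSeries

/-! ### Values of polynomials and power sums -/

theorem map_natCast_nonneg {R Γ₀ : Type*} [Ring R] [LinearOrderedAddCommMonoidWithTop Γ₀]
    (v : AddValuation R Γ₀) (n : ℕ) : 0 ≤ v (n : R) := by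
  induction n with
  | zero => simp
  | succ n ih => exact_mod_cast v.map_le_add ih v.map_one.ge

theorem exists_ne_top_forall_le_map_eval {R Γ₀ : Type*} [CommRing R]
    [LinearOrderedAddCommGroupWithTop Γ₀] (v : AddValuation R Γ₀) (P : R[X]) :
    ∃ c ≠ ⊤, ∀ n : ℕ, c ≤ v (P.eval (n : R)) := by
  refine ⟨min 0 (P.support.inf fun i => v (P.coeff i)), ?_, fun n => ?_⟩
  · exact ((min_le_left _ _).trans_lt LinearOrderedAddCommGroupWithTop.top_pos).ne
  · rw [eval_eq_sum, Polynomial.sum_def]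
    refine v.map_le_sum fun i hi => ?_
    rw [v.map_mul, ← Nat.cast_pow]
    exact (min_le_right _ _).trans <| (Finset.inf_le hi).trans <|
      le_add_of_nonneg_right (map_natCast_nonneg v _)

section
variable {K Γ₀ : Type*} [Field K] [LinearOrderedAddCommGroupWithTop Γ₀] {v : AddValuation K Γ₀}
  (hv : ∀ n : ℕ, n ≠ 0 → v n = 0)
include hv

theorem map_natCast_sub_natCast {m n : ℕ} (hmn : m ≠ n) : v ((m : K) - n) = 0 := by
  wlog h : m < n generalizing m n
  · rw [v.map_sub_swap]
    exact this hmn.symm (hmn.lt_or_gt.resolve_left h)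
  · rw [v.map_sub_swap, ← Nat.cast_sub h.le]
    exact hv _ (Nat.sub_ne_zero_of_lt h)

theorem charZero_of_map_natCast_eq_zero : CharZero K :=
  charZero_of_inj_zero fun n hn => by_contra fun hn0 => LinearOrderedAddCommGroupWithTop.top_ne_zero
    (by rw [← v.map_zero, ← hn, hv n hn0])

-- Lagrange interpolation expresses the leading coefficient through any `natDegree + 1` values.
theorem eventually_map_eval_le {P : K[X]} (hP : P ≠ 0) :
    ∀ᶠ n : ℕ in atTop, v (P.eval (n : K)) ≤ v P.leadingCoeff := by
  have := charZero_of_map_natCast_eq_zero hv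
  by_contra hlarge
  simp only [not_eventually, not_le, Nat.frequently_atTop_iff_infinite] at hlarge
  obtain ⟨s, hs, hcard⟩ := hlarge.exists_subset_card_eq (P.natDegree + 1)
  have hlagrange := Lagrange.leadingCoeff_eq_sum (s := s) (v := ((↑) : ℕ → K)) (P := P)
    Nat.cast_injective.injOn (by rw [hcard, degree_eq_natDegree hP]; rfl)
  refine lt_irrefl (v P.leadingCoeff) ?_
  nth_rw 2 [hlagrange]
  refine v.map_lt_sum (v.ne_top_iff.2 (leadingCoeff_ne_zero.2 hP)) fun m hm => ?_
  have hdenom : v (∏ n ∈ s.erase m, ((m : K) - n)) = 0 :=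
    Finset.prod_induction _ (v · = 0) (fun _ _ hx hy => by rw [v.map_mul, hx, hy, add_zero])
      v.map_one fun n hn => map_natCast_sub_natCast hv (Finset.ne_of_mem_erase hn).symm
  rw [v.map_div, hdenom, sub_zero]
  exact hs hm

end

section
variable {R ι : Type*} [CommRing R]

/-- The power sum `n ↦ ∑ i ∈ s, aᵢ(n) αᵢⁿ` with characteristic roots `αᵢ` and polynomial
coefficients `aᵢ`. -/
noncomputable def powerSum (s : Finset ι) (α : ι → R) (a : ι → R[X]) (n : ℕ) : R :=
  ∑ i ∈ s, (a i).eval (n : R) * α i ^ n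

theorem map_powerSum {S : Type*} [CommRing S] (ψ : R →+* S) (s : Finset ι)
    (α : ι → R) (a : ι → R[X]) (n : ℕ) :
    ψ (powerSum s α a n) = powerSum s (fun i => ψ (α i)) (fun i => (a i).map ψ) n := by
  simp [powerSum, ← eval_natCast_map]

theorem exists_forall_add_nsmul_inf'_le_map_powerSum {Γ₀ : Type*}
    [LinearOrderedAddCommGroupWithTop Γ₀] (v : AddValuation R Γ₀) {s : Finset ι}
    (hs : s.Nonempty) (α : ι → R) (a : ι → R[X]) :
    ∃ c ≠ ⊤, ∀ n, c + n • s.inf' hs (fun i => v (α i)) ≤ v (powerSum s α a n) := by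
  choose c hc hle using fun i => exists_ne_top_forall_le_map_eval v (a i)
  obtain ⟨j, -, hj⟩ := s.exists_mem_eq_inf' hs c
  refine ⟨s.inf' hs c, hj ▸ hc j, fun n => v.map_le_sum fun i hi => ?_⟩
  rw [v.map_mul, v.map_pow]
  exact add_le_add ((s.inf'_le c hi).trans (hle i n))
    (nsmul_le_nsmul_right (s.inf'_le (fun i => v (α i)) hi) n)

end

/-! ### Elimination of a root -/

section
variable {K ι : Type*} [Field K] [Differential K]
open Differential (mapCoeffs coeff_mapCoeffs deriv_aeval_eq)

/-- The polynomial `ã` such that the derivative of `a(n) αⁿ` is `ã(n) αⁿ`. -/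
noncomputable def derivCoeff (α : K) (a : K[X]) : K[X] :=
  mapCoeffs a + X * (C (Differential.logDeriv α) * a)

theorem deriv_eval_natCast (a : K[X]) (n : ℕ) :
    (a.eval (n : K))′ = (mapCoeffs a).eval (n : K) := by
  simpa using deriv_aeval_eq (n : K) a

theorem deriv_eval_mul_pow {α : K} (hα : α ≠ 0) (a : K[X]) (n : ℕ) :
    (a.eval (n : K) * α ^ n)′ = (derivCoeff α a).eval (n : K) * α ^ n := by
  have hpow : (α ^ n)′ = n * Differential.logDeriv α * α ^ n := by
    rw [← Differential.logDeriv_pow, Differential.logDeriv, div_mul_cancel₀ _ (pow_ne_zero n hα)]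
  simp only [Derivation.leibniz, smul_eq_mul, hpow, deriv_eval_natCast, derivCoeff, eval_add,
    eval_mul, eval_X, eval_C]
  ring

/-- The coefficient of `αⁿ` in `b(n) S(n)′ - b̃(n) S(n)`, where `S` is a power sum in which `αⁿ` has
the coefficient `a` and `b̃ = derivCoeff β b`. If `βⁿ` has the coefficient `b` in `S`, this
operation removes the root `β` from `S`. -/
noncomputable def eliminant (β : K) (b : K[X]) (α : K) (a : K[X]) : K[X] :=
  b * derivCoeff α a - derivCoeff β b * a

theorem eliminant_self (α : K) (a : K[X]) : eliminant α a α a = 0 := by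
  rw [eliminant, mul_comm, sub_self]

theorem natDegree_mapCoeffs_le (a : K[X]) : (mapCoeffs a).natDegree ≤ a.natDegree := by
  refine natDegree_le_iff_coeff_eq_zero.2 fun n hn => ?_
  rw [coeff_mapCoeffs, coeff_eq_zero_of_natDegree_lt hn, map_zero]

theorem coeff_eliminant (α β : K) (a b : K[X]) :
    (eliminant β b α a).coeff (b.natDegree + a.natDegree + 1) =
      (Differential.logDeriv α - Differential.logDeriv β) * (b.leadingCoeff * a.leadingCoeff) := by
  have hsplit : eliminant β b α a =
      X * (C (Differential.logDeriv α - Differential.logDeriv β) * (b * a)) +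
        (b * mapCoeffs a - mapCoeffs b * a) := by
    simp only [eliminant, derivCoeff, map_sub]
    ring
  have hlow : (b * mapCoeffs a - mapCoeffs b * a).coeff (b.natDegree + a.natDegree + 1) = 0 := by
    refine coeff_eq_zero_of_natDegree_lt (Nat.lt_succ_of_le ?_)
    refine (natDegree_sub_le_of_le
      (natDegree_mul_le_of_le le_rfl (natDegree_mapCoeffs_le a))
      (natDegree_mul_le_of_le (natDegree_mapCoeffs_le b) le_rfl)).trans (max_self _).le
  rw [hsplit, coeff_add, hlow, add_zero, coeff_X_mul, coeff_C_mul, coeff_mul_degree_add_degree]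

theorem eliminant_ne_zero {α β : K} (h : Differential.logDeriv α ≠ Differential.logDeriv β)
    {a b : K[X]} (ha : a ≠ 0) (hb : b ≠ 0) : eliminant β b α a ≠ 0 := by
  intro hzero
  have hcoeff := coeff_eliminant α β a b
  rw [hzero, coeff_zero] at hcoeff
  exact mul_ne_zero (sub_ne_zero.2 h)
    (mul_ne_zero (leadingCoeff_ne_zero.2 hb) (leadingCoeff_ne_zero.2 ha)) hcoeff.symm

variable {s : Finset ι} {α : ι → K} {a : ι → K[X]}

theorem deriv_powerSum (hα : ∀ i ∈ s, α i ≠ 0) (n : ℕ) :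
    (powerSum s α a n)′ = powerSum s α (fun i => derivCoeff (α i) (a i)) n := by
  simp only [powerSum, map_sum]
  exact Finset.sum_congr rfl fun i hi => deriv_eval_mul_pow (hα i hi) (a i) n

theorem powerSum_erase_eliminant [DecidableEq ι] (hα : ∀ i ∈ s, α i ≠ 0) (j : ι) (n : ℕ) :
    powerSum (s.erase j) α (fun i => eliminant (α j) (a j) (α i) (a i)) n =
      (a j).eval (n : K) * (powerSum s α a n)′ -
        (derivCoeff (α j) (a j)).eval (n : K) * powerSum s α a n := by
  have hj : (eliminant (α j) (a j) (α j) (a j)).eval (n : K) * α j ^ n = 0 := by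
    rw [eliminant_self, eval_zero, zero_mul]
  rw [deriv_powerSum hα, powerSum, Finset.sum_erase s hj]
  simp only [powerSum, Finset.mul_sum, ← Finset.sum_sub_distrib, eliminant, eval_sub, eval_mul]
  exact Finset.sum_congr rfl fun i _ => by ring

variable {Γ₀ : Type*} [LinearOrderedAddCommGroupWithTop Γ₀] {v : AddValuation K Γ₀}

theorem exists_forall_add_map_powerSum_le [DecidableEq ι] (hδ : ∀ f, v f ≤ v f′)
    (hα : ∀ i ∈ s, α i ≠ 0) (j : ι) :
    ∃ c ≠ ⊤, ∀ n, c + v (powerSum s α a n) ≤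
      v (powerSum (s.erase j) α (fun i => eliminant (α j) (a j) (α i) (a i)) n) := by
  obtain ⟨c₁, hc₁, hle₁⟩ := exists_ne_top_forall_le_map_eval v (a j)
  obtain ⟨c₂, -, hle₂⟩ := exists_ne_top_forall_le_map_eval v (derivCoeff (α j) (a j))
  refine ⟨min c₁ c₂, (min_lt_iff.2 <| .inl hc₁.lt_top).ne, fun n => ?_⟩
  rw [powerSum_erase_eliminant hα]
  refine v.map_le_sub ?_ ?_ <;> rw [v.map_mul]
  · exact add_le_add ((min_le_left _ _).trans (hle₁ n)) (hδ _)
  · exact add_le_add_left ((min_le_right _ _).trans (hle₂ n)) _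

theorem exists_eventually_map_powerSum_le (hv : ∀ n : ℕ, n ≠ 0 → v n = 0)
    (hδ : ∀ f, v f ≤ v f′) (hα : ∀ i ∈ s, α i ≠ 0)
    (hlog : Set.InjOn (fun i => Differential.logDeriv (α i)) s) (ha : ∀ i ∈ s, a i ≠ 0)
    {k : ι} (hk : k ∈ s) :
    ∃ c ≠ ⊤, ∀ᶠ n in atTop, v (powerSum s α a n) ≤ c + v (α k ^ n) := by
  classical
  induction s using Finset.strongInduction generalizing a with
  | H s ih =>
    by_cases hother : ∃ j ∈ s, j ≠ k
    · obtain ⟨j, hj, hjk⟩ := hother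
      obtain ⟨c, hc, hle⟩ := exists_forall_add_map_powerSum_le (a := a) hδ hα j
      have hmem : ∀ i ∈ s.erase j, i ∈ s := fun i => Finset.mem_of_mem_erase
      have hne : ∀ i ∈ s.erase j, eliminant (α j) (a j) (α i) (a i) ≠ 0 := fun i hi =>
        eliminant_ne_zero (hlog.ne (hmem i hi) hj (Finset.ne_of_mem_erase hi))
          (ha i (hmem i hi)) (ha j hj)
      obtain ⟨d, hd, hupper⟩ := ih _ (Finset.erase_ssubset hj) (fun i hi => hα i (hmem i hi))
        (hlog.mono hmem) hne (Finset.mem_erase.2 ⟨hjk.symm, hk⟩)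
      refine ⟨-c + d, by simp [hc, hd], ?_⟩
      filter_upwards [hupper] with n hn
      calc v (powerSum s α a n) = -c + (c + v (powerSum s α a n)) :=
            (LinearOrderedAddCommGroupWithTop.neg_add_cancel_left_of_ne_top hc _).symm
        _ ≤ -c + (d + v (α k ^ n)) := add_le_add_right ((hle n).trans hn) _
        _ = -c + d + v (α k ^ n) := (add_assoc _ _ _).symm
    · obtain rfl : s = {k} := Finset.eq_singleton_iff_unique_mem.2 ⟨hk, by simpa using hother⟩
      have hak := ha k hk
      refine ⟨v (a k).leadingCoeff, v.ne_top_iff.2 (leadingCoeff_ne_zero.2 hak), ?_⟩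
      filter_upwards [eventually_map_eval_le hv hak] with n hn
      rw [powerSum, Finset.sum_singleton, v.map_mul]
      gcongr

end

/-! ### The Euler operator on Laurent series -/

/-- The differential ring structure given by an additive map satisfying the Leibniz rule. In a
general ring `A` the `ℤ`-algebra structure is unambiguous, whereas `R⸨X⸩` has several, not all of
them definitionally equal to the one in `Differential`. -/
abbrev differentialOfLeibniz {A : Type*} [CommRing A] (D : A →+ A)
    (hD : ∀ a b, D (a * b) = a * D b + b * D a) : Differential A where
  deriv := .mk' D.toIntLinearMap hD

section
variable {R : Type*} [CommRing R]

/-- The Euler operator `X · d/dX` on Laurent series. -/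
noncomputable def eulerOperator : R⸨X⸩ →+ R⸨X⸩ where
  toFun f :=
    { coeff := fun n => n * f.coeff n
      isPWO_support' := f.isPWO_support.mono fun _ hn => right_ne_zero_of_mul hn }
  map_zero' := by ext; simp
  map_add' f g := by ext; simp [mul_add]

theorem coeff_eulerOperator (f : R⸨X⸩) (n : ℤ) : (eulerOperator f).coeff n = n * f.coeff n := rfl

theorem support_eulerOperator_subset (f : R⸨X⸩) : (eulerOperator f).support ⊆ f.support :=
  fun _ hn => right_ne_zero_of_mul hn

theorem eulerOperator_mul (f g : R⸨X⸩) :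
    eulerOperator (f * g) = f * eulerOperator g + g * eulerOperator f := by
  ext n
  rw [mul_comm g, HahnSeries.coeff_add, coeff_eulerOperator, HahnSeries.coeff_mul,
    HahnSeries.coeff_mul_right' g.isPWO_support (support_eulerOperator_subset g),
    HahnSeries.coeff_mul_left' f.isPWO_support (support_eulerOperator_subset f),
    Finset.mul_sum, ← Finset.sum_add_distrib]
  refine Finset.sum_congr rfl fun ij hij => ?_
  rw [coeff_eulerOperator, coeff_eulerOperator, ← (Finset.mem_antidiagonal.1 hij).2.2]
  push_cast
  ring

/-- Laurent series are differentiated by `X · d/dX` rather than by `d/dX`, because the former does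
not decrease the order. -/
noncomputable instance : Differential R⸨X⸩ :=
  differentialOfLeibniz eulerOperator eulerOperator_mul

theorem coeff_deriv (f : R⸨X⸩) (n : ℤ) : (f′).coeff n = n * f.coeff n := rfl

theorem addVal_le_addVal_deriv [IsDomain R] (f : R⸨X⸩) :
    HahnSeries.addVal ℤ R f ≤ HahnSeries.addVal ℤ R f′ := by
  simp only [HahnSeries.addVal_apply]
  refine HahnSeries.le_orderTop_iff_forall.2 fun n hn => ?_
  rw [coeff_deriv, HahnSeries.coeff_eq_zero_of_lt_orderTop hn, mul_zero]

theorem mem_range_C_of_deriv_eq_zero [NoZeroDivisors R] [CharZero R] {f : R⸨X⸩} (hf : f′ = 0) :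
    f ∈ Set.range (HahnSeries.C : R →+* R⸨X⸩) := by
  refine ⟨f.coeff 0, ?_⟩
  ext n
  rw [HahnSeries.C_apply, HahnSeries.coeff_single]
  split_ifs with hn
  · rw [hn]
  · have hcoeff : (n : R) * f.coeff n = 0 := by rw [← coeff_deriv, hf, HahnSeries.coeff_zero]
    exact ((mul_eq_zero.1 hcoeff).resolve_left (Int.cast_ne_zero.2 hn)).symm

theorem addVal_C [IsDomain R] {c : R} (hc : c ≠ 0) :
    HahnSeries.addVal ℤ R (HahnSeries.C c) = 0 := by
  rw [HahnSeries.C_apply, HahnSeries.addVal_apply, HahnSeries.orderTop_single hc]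
  rfl

end

section
variable {k ι : Type*} [Field k] [CharZero k] {s : Finset ι} {α : ι → k⸨X⸩} {a : ι → k⸨X⸩[X]}

theorem injOn_logDeriv_of_div_notMem_range_C (hα : ∀ i ∈ s, α i ≠ 0)
    (hratio : (s : Set ι).Pairwise fun i j => α i / α j ∉ Set.range (HahnSeries.C : k →+* k⸨X⸩)) :
    Set.InjOn (fun i => Differential.logDeriv (α i)) s := by
  intro i hi j hj hij
  by_contra hne
  refine hratio hi hj hne (mem_range_C_of_deriv_eq_zero ?_)
  rw [← Differential.logDeriv_eq_zero, Differential.logDeriv_div _ _ (hα i hi) (hα j hj),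
    sub_eq_zero]
  exact hij

theorem exists_eventually_addVal_powerSum_le (hα : ∀ i ∈ s, α i ≠ 0)
    (hratio : (s : Set ι).Pairwise fun i j => α i / α j ∉ Set.range (HahnSeries.C : k →+* k⸨X⸩))
    (ha : ∀ i ∈ s, a i ≠ 0) {i : ι} (hi : i ∈ s) :
    ∃ c ≠ ⊤, ∀ᶠ n in atTop,
      HahnSeries.addVal ℤ k (powerSum s α a n) ≤ c + HahnSeries.addVal ℤ k (α i ^ n) := by
  refine exists_eventually_map_powerSum_le (fun n hn => ?_) addVal_le_addVal_deriv hα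
    (injOn_logDeriv_of_div_notMem_range_C hα hratio) ha hi
  rw [← map_natCast (HahnSeries.C : k →+* k⸨X⸩)]
  exact addVal_C (Nat.cast_ne_zero.2 hn)

end

/-! ### Expansion at a rational place -/

section
variable {k O : Type*} [CommRing k] [CommRing O] [Algebra k O]

/-- The power series of the coefficients produced by iterating `f = ε f + π * τ f`, i.e. the
expansion of `f` in powers of the parameter `π`. -/
noncomputable def expansion (ε : O →ₐ[k] k) (τ : O →ₗ[k] O) : O →ₗ[k] k⟦X⟧ where
  toFun f := .mk fun n => ε ((τ ^ n) f)
  map_add' f g := by ext; simp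
  map_smul' c f := by ext; simp

variable {ε : O →ₐ[k] k} {τ : O →ₗ[k] O}

theorem expansion_eq_C_add_X_mul (f : O) :
    expansion ε τ f = PowerSeries.C (ε f) + PowerSeries.X * expansion ε τ (τ f) := by
  ext n
  cases n with
  | zero => simp [expansion]
  | succ n => simp [expansion, pow_succ, PowerSeries.coeff_succ_X_mul]

theorem eq_zero_of_forall_exists_eq_X_mul {T : Type*} {F : T → k⟦X⟧}
    (hF : ∀ t, ∃ t', F t = PowerSeries.X * F t') (t : T) : F t = 0 := by
  ext n
  induction n generalizing t with
  | zero => obtain ⟨t', ht'⟩ := hF t; simp [ht']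
  | succ n ih => obtain ⟨t', ht'⟩ := hF t; rw [ht', PowerSeries.coeff_succ_X_mul, ih]; rfl

variable [IsDomain O] {π : O}

theorem expansion_mul (hπ : π ≠ 0) (hτ : ∀ f, f = algebraMap k O (ε f) + π * τ f) (f g : O) :
    expansion ε τ (f * g) = expansion ε τ f * expansion ε τ g := by
  have hτ_mul (f g : O) : τ (f * g) = τ f * g + ε f • τ g := by
    refine mul_left_cancel₀ hπ ?_
    have hfg := hτ (f * g)
    rw [map_mul, map_mul] at hfg
    rw [Algebra.smul_def]
    linear_combination g * hτ f - hfg + algebraMap k O (ε f) * hτ g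
  refine sub_eq_zero.1 <| eq_zero_of_forall_exists_eq_X_mul
    (F := fun p : O × O => expansion ε τ (p.1 * p.2) - expansion ε τ p.1 * expansion ε τ p.2)
    (fun p => ⟨(τ p.1, p.2), ?_⟩) (f, g)
  rw [expansion_eq_C_add_X_mul (p.1 * p.2), expansion_eq_C_add_X_mul p.1, hτ_mul, map_add,
    map_smul, PowerSeries.smul_eq_C_mul, map_mul, map_mul]
  linear_combination -PowerSeries.C (ε p.1) * expansion_eq_C_add_X_mul (ε := ε) (τ := τ) p.2

theorem expansion_one (hπ : π ≠ 0) (hτ : ∀ f, f = algebraMap k O (ε f) + π * τ f) :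
    expansion ε τ 1 = 1 := by
  have hτ_one : τ 1 = 0 := by simpa [hπ] using hτ 1
  rw [expansion_eq_C_add_X_mul, hτ_one, map_one, map_one, map_zero, mul_zero, add_zero]

theorem expansion_parameter (hπ : π ≠ 0) (hεπ : ε π = 0)
    (hτ : ∀ f, f = algebraMap k O (ε f) + π * τ f) : expansion ε τ π = PowerSeries.X := by
  have hτ_self : τ π = 1 := by simpa [hεπ, hπ, eq_comm] using hτ π
  rw [expansion_eq_C_add_X_mul, hεπ, hτ_self, expansion_one hπ hτ, map_zero, zero_add, mul_one]

theorem exists_linearMap_eq_algebraMap_add_mul (hπ : π ≠ 0) (hε : ∀ f, ε f = 0 → π ∣ f) :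
    ∃ τ : O →ₗ[k] O, ∀ f, f = algebraMap k O (ε f) + π * τ f := by
  have hdvd (f : O) : π ∣ f - algebraMap k O (ε f) := hε _ (by simp)
  choose τ hτ using hdvd
  refine ⟨{ toFun := τ, map_add' := fun f g => ?_, map_smul' := fun c f => ?_ }, fun f => ?_⟩
  · refine mul_left_cancel₀ hπ ?_
    rw [mul_add, ← hτ, ← hτ, ← hτ, map_add, map_add]
    ring
  · refine mul_left_cancel₀ hπ ?_
    rw [RingHom.id_apply, mul_smul_comm, ← hτ, ← hτ, map_smul, smul_eq_mul, map_mul, smul_sub,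
      Algebra.smul_def c (algebraMap k O _)]
  · exact (add_eq_of_eq_sub' (hτ f).symm).symm

theorem exists_algHom_powerSeries (hπ : π ≠ 0)
    (hbij : Function.Bijective (algebraMap k (O ⧸ Ideal.span {π}))) :
    ∃ φ : O →ₐ[k] k⟦X⟧, φ π = PowerSeries.X := by
  let ε : O →ₐ[k] k := (AlgEquiv.ofBijective (Algebra.ofId k _) hbij).symm.toAlgHom.comp
    (Ideal.Quotient.mkₐ k (Ideal.span {π}))
  have hε (f : O) : ε f = 0 ↔ π ∣ f := by
    simp [ε, Ideal.Quotient.eq_zero_iff_mem, Ideal.mem_span_singleton]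
  obtain ⟨τ, hτ⟩ := exists_linearMap_eq_algebraMap_add_mul hπ fun f => (hε f).1
  exact ⟨.ofLinearMap (expansion ε τ) (expansion_one hπ hτ) (expansion_mul hπ hτ),
    expansion_parameter hπ ((hε π).2 dvd_rfl) hτ⟩

end

theorem addVal_ofPowerSeries_nonneg {R : Type*} [CommRing R] [IsDomain R] (F : R⟦X⟧) :
    0 ≤ HahnSeries.addVal ℤ R (HahnSeries.ofPowerSeries ℤ R F) := by
  rw [HahnSeries.addVal_apply, HahnSeries.ofPowerSeries_apply, HahnSeries.orderTop_embDomain]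
  cases (HahnSeries.toPowerSeries.symm F).orderTop <;> simp

theorem addVal_ofPowerSeries_X {R : Type*} [CommRing R] [IsDomain R] :
    HahnSeries.addVal ℤ R (HahnSeries.ofPowerSeries ℤ R PowerSeries.X) = 1 := by
  rw [HahnSeries.ofPowerSeries_X, HahnSeries.addVal_apply, HahnSeries.orderTop_single one_ne_zero]
  rfl

theorem map_algebraMap_nonneg {k L Γ₀ : Type*} [Field k] [Field L] [Algebra k L]
    [LinearOrderedAddCommGroupWithTop Γ₀] {v : AddValuation L Γ₀}
    (hv : ∀ c : k, c ≠ 0 → v (algebraMap k L c) = 0) (c : k) : 0 ≤ v (algebraMap k L c) := by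
  rcases eq_or_ne c 0 with rfl | hc
  · simp
  · exact (hv c hc).ge

theorem withTopInt_one_le_iff_pos {x : WithTop ℤ} : 1 ≤ x ↔ 0 < x := by
  cases x with
  | top => simp
  | coe n => norm_cast

theorem map_div_nonneg {K Γ₀ : Type*} [Field K] [LinearOrderedAddCommGroupWithTop Γ₀]
    {v : AddValuation K Γ₀} {f g : K} (hf : f ≠ 0) (hfg : v f ≤ v g) : 0 ≤ v (g / f) := by
  have hvf : v f ≠ ⊤ := v.ne_top_iff.2 hf
  rw [v.map_div, ← LinearOrderedAddCommGroupWithTop.sub_self_eq_zero_of_ne_top hvf]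
  exact (LinearOrderedAddCommGroupWithTop.sub_le_sub_iff_left_of_ne_top hvf).2 hfg

theorem map_zpow_of_map_eq_one {K : Type*} [Field K] {v : AddValuation K (WithTop ℤ)} {π : K}
    (hπ : v π = 1) (n : ℤ) : v (π ^ n) = n := by
  cases n with
  | ofNat n => simp [v.map_pow, hπ]
  | negSucc n => rw [zpow_negSucc, v.map_inv, v.map_pow, hπ, nsmul_one]; rfl

theorem map_eq_map_of_forall_nonneg {K : Type*} [Field K] {v w : AddValuation K (WithTop ℤ)}
    (hvw : ∀ f, 0 ≤ v f → 0 ≤ w f) {π : K} (hvπ : v π = 1) (hwπ : w π = 1) (f : K) :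
    w f = v f := by
  have hle (f : K) : v f ≤ w f := by
    rcases eq_or_ne f 0 with rfl | hf
    · simp
    obtain ⟨n, hn⟩ := WithTop.ne_top_iff_exists.1 (v.ne_top_iff.2 hf)
    have hπn : π ^ n ≠ 0 := v.ne_top_iff.1 <| by simp [map_zpow_of_map_eq_one hvπ]
    have hquot : 0 ≤ w (f / π ^ n) :=
      hvw _ (map_div_nonneg hπn (by rw [map_zpow_of_map_eq_one hvπ, hn]))
    calc v f = w (π ^ n) := by rw [map_zpow_of_map_eq_one hwπ, hn]
      _ ≤ w (f / π ^ n) + w (π ^ n) := le_add_of_nonneg_left hquot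
      _ = w f := by rw [← w.map_mul, div_mul_cancel₀ _ hπn]
  refine (hle f).antisymm' ?_
  rcases eq_or_ne f 0 with rfl | hf
  · simp
  have hcancel (u : AddValuation K (WithTop ℤ)) : u f⁻¹ + u f = 0 := by
    rw [← u.map_mul, inv_mul_cancel₀ hf, u.map_one]
  calc w f = v f⁻¹ + v f + w f := by rw [hcancel, zero_add]
    _ ≤ w f⁻¹ + v f + w f := by gcongr; exact hle f⁻¹
    _ = v f := by rw [add_right_comm, hcancel, zero_add]

section
variable (k : Type*) {L : Type*} [Field k] [Field L] [Algebra k L]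

/-- A rational place of `L / k`: a normalized discrete valuation of `L` that is trivial on `k` and
has residue field `k`. Since `v (algebraMap k L 0) = ⊤`, triviality is required on `c ≠ 0` only. -/
structure IsRationalPlace (v : AddValuation L (WithTop ℤ)) : Prop where
  map_algebraMap : ∀ c : k, c ≠ 0 → v (algebraMap k L c) = 0
  exists_residue : ∀ f, 0 ≤ v f → ∃ c : k, 0 < v (f - algebraMap k L c)
  exists_uniformizer : ∃ π, v π = 1

namespace IsRationalPlace
variable {k} {v : AddValuation L (WithTop ℤ)} (hv : IsRationalPlace k v)
include hv

/-- The valuation ring of a rational place. -/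
def valuationRing : Subalgebra k L where
  carrier := {f | 0 ≤ v f}
  mul_mem' hf hg := by simpa only [Set.mem_ofPred_eq, v.map_mul] using add_nonneg hf hg
  add_mem' hf hg := v.map_le_add hf hg
  algebraMap_mem' := map_algebraMap_nonneg hv.map_algebraMap

instance : IsFractionRing hv.valuationRing L := .of_field _ _ fun f => by
  rcases le_total 0 (v f) with hf | hf
  · exact ⟨⟨f, hf⟩, 1, (div_one f).symm⟩
  · have hf0 : f ≠ 0 := by rintro rfl; simp at hf
    have hinv : 0 ≤ v f⁻¹ := by simpa using map_div_nonneg (g := 1) hf0 (by simpa using hf)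
    exact ⟨1, ⟨f⁻¹, hinv⟩, by simp⟩

theorem dvd_iff_map_le_map {f g : hv.valuationRing} (hf : f ≠ 0) : f ∣ g ↔ v f ≤ v g := by
  have hf' : (f : L) ≠ 0 := Subtype.coe_ne_coe.2 hf
  constructor
  · rintro ⟨h, rfl⟩
    rw [MulMemClass.coe_mul, v.map_mul]
    exact le_add_of_nonneg_right h.2
  · exact fun hfg => ⟨⟨g / f, map_div_nonneg hf' hfg⟩, Subtype.ext (mul_div_cancel₀ _ hf').symm⟩

theorem exists_dvd_pow {f π : hv.valuationRing} (hπ : v π = 1) (hf : f ≠ 0) : ∃ n, f ∣ π ^ n := by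
  obtain ⟨n, hn⟩ := WithTop.ne_top_iff_exists.1 (v.ne_top_iff.2 (Subtype.coe_ne_coe.2 hf))
  refine ⟨n.toNat, (hv.dvd_iff_map_le_map hf).2 ?_⟩
  rw [SubmonoidClass.coe_pow, v.map_pow, hπ, ← hn, nsmul_one]
  exact_mod_cast n.self_le_toNat

theorem bijective_algebraMap_quotient {π : hv.valuationRing} (hπ : v π = 1) :
    Function.Bijective (algebraMap k (hv.valuationRing ⧸ Ideal.span {π})) := by
  have hπ0 : π ≠ 0 := by rintro rfl; simp at hπ
  have hdvd (f : hv.valuationRing) : π ∣ f ↔ 0 < v f := by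
    rw [hv.dvd_iff_map_le_map hπ0, hπ, withTopInt_one_le_iff_pos]
  have : Nontrivial (hv.valuationRing ⧸ Ideal.span {π}) := by
    rw [Ideal.Quotient.nontrivial_iff, Ne, Ideal.span_singleton_eq_top, isUnit_iff_dvd_one, hdvd]
    simp
  refine ⟨(algebraMap k _).injective, fun f => ?_⟩
  obtain ⟨f, rfl⟩ := Ideal.Quotient.mk_surjective f
  obtain ⟨c, hc⟩ := hv.exists_residue f f.2
  refine ⟨c, (Ideal.Quotient.eq.2 ?_).symm⟩
  rw [Ideal.mem_span_singleton, hdvd]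
  exact hc

theorem exists_injective_algHom_powerSeries :
    ∃ (π : hv.valuationRing) (φ : hv.valuationRing →ₐ[k] k⟦X⟧),
      v π = 1 ∧ φ π = PowerSeries.X ∧ Function.Injective φ := by
  obtain ⟨π, hπ⟩ := hv.exists_uniformizer
  lift π to hv.valuationRing using zero_le_one.trans_eq hπ.symm
  have hπ0 : π ≠ 0 := by rintro rfl; simp at hπ
  obtain ⟨φ, hφπ⟩ := exists_algHom_powerSeries hπ0 (hv.bijective_algebraMap_quotient hπ)
  refine ⟨π, φ, hπ, hφπ, (injective_iff_map_eq_zero φ).2 fun f hf => by_contra fun hf0 => ?_⟩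
  obtain ⟨n, hn⟩ := hv.exists_dvd_pow hπ hf0
  have hdvd := map_dvd φ hn
  rw [hf, map_pow, hφπ, zero_dvd_iff] at hdvd
  exact pow_ne_zero n PowerSeries.X_ne_zero hdvd

theorem exists_ringHom_laurentSeries : ∃ ψ : L →+* k⸨X⸩,
    (∀ c, ψ (algebraMap k L c) = HahnSeries.C c) ∧ ∀ f, HahnSeries.addVal ℤ k (ψ f) = v f := by
  obtain ⟨π, φ, hπ, hφπ, hφ⟩ := hv.exists_injective_algHom_powerSeries
  have hinj : Function.Injective
      ((HahnSeries.ofPowerSeries ℤ k).comp (φ : hv.valuationRing →+* k⟦X⟧)) :=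
    HahnSeries.ofPowerSeries_injective.comp hφ
  let ψ : L →+* k⸨X⸩ := IsFractionRing.lift hinj
  have hψ (f : hv.valuationRing) : ψ f = HahnSeries.ofPowerSeries ℤ k (φ f) :=
    IsFractionRing.lift_algebraMap hinj f
  refine ⟨ψ, fun c => ?_, map_eq_map_of_forall_nonneg (v := v)
    (w := (HahnSeries.addVal ℤ k).comap ψ) (fun f hf => ?_) hπ ?_⟩
  · rw [IsScalarTower.algebraMap_apply k hv.valuationRing L]
    exact (hψ _).trans (by simp)
  · exact (addVal_ofPowerSeries_nonneg _).trans_eq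
      (congrArg (HahnSeries.addVal ℤ k) (hψ ⟨f, hf⟩)).symm
  · exact (congrArg (HahnSeries.addVal ℤ k) (hψ π)).trans (by rw [hφπ, addVal_ofPowerSeries_X])

end IsRationalPlace

end

/-! ### Places of function fields -/

open Algebra in
theorem trdeg_eq_one_of_functionField (k L : Type*) [Field k] [Field L] [Algebra k L]
    [Algebra (RatFunc k) L] [IsScalarTower k (RatFunc k) L] [FunctionField k L] :
    Algebra.trdeg k L = 1 := by
  have hratFunc : Algebra.trdeg k (RatFunc k) = 1 := by
    have : Algebra.IsAlgebraic k[X] (RatFunc k) :=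
      IsLocalization.isAlgebraic _ (nonZeroDivisors k[X])
    rw [← trdeg_add_eq k k[X], Polynomial.trdeg_of_isDomain, trdeg_eq_zero, add_zero]
  have htower := lift_trdeg_add_eq k (RatFunc k) L
  rw [hratFunc, trdeg_eq_zero] at htower
  simpa using htower.symm

section
variable {k L Γ₀ : Type*} [Field k] [Field L] [Algebra k L] [LinearOrderedAddCommGroupWithTop Γ₀]
  {v : AddValuation L Γ₀}

theorem map_aeval_eq_zero_of_forall_map_sub [IsAlgClosed k]
    (hv : ∀ c : k, c ≠ 0 → v (algebraMap k L c) = 0)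
    {f : L} (hf : ∀ c : k, v (f - algebraMap k L c) = 0) {p : k[X]} (hp : p ≠ 0) :
    v (aeval f p) = 0 := by
  rw [(IsAlgClosed.splits p).eq_prod_roots, map_mul, aeval_C, v.map_mul,
    hv _ (leadingCoeff_ne_zero.2 hp), zero_add, map_multiset_prod, Multiset.map_map]
  refine Multiset.prod_induction (v · = 0) _
    (fun _ _ hx hy => by rw [v.map_mul, hx, hy, add_zero]) v.map_one ?_
  rintro _ hx
  obtain ⟨c, -, rfl⟩ := Multiset.mem_map.1 hx
  simpa using hf c

open Algebra in
theorem isTrivialOn_adjoin_singleton {f : L} (hf : ∀ p : k[X], p ≠ 0 → v (aeval f p) = 0) :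
    v.toValuation.IsTrivialOn (adjoin k {f}) where
  eq_one := by
    rintro ⟨g, hg⟩ hg0
    rw [adjoin_singleton_eq_range_aeval] at hg
    obtain ⟨p, rfl⟩ := hg
    have hp : p ≠ 0 := by rintro rfl; exact hg0 (Subtype.ext (map_zero (aeval f)))
    exact congrArg (fun x => Multiplicative.ofAdd (OrderDual.toDual x)) (hf p hp)

end

section
variable {k L : Type*} [Field k] [Field L] [Algebra k L]

theorem isAlgebraic_adjoin_singleton (hL : Algebra.trdeg k L ≤ 1) {f : L}
    (hf : Transcendental k f) :
    Algebra.IsAlgebraic (Algebra.adjoin k {f}) L := by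
  have hind : AlgebraicIndependent k fun _ : Unit => f := algebraicIndependent_unique_type_iff.2 hf
  have hbasis := hind.isTranscendenceBasis_of_lift_trdeg_le_of_finite (by simpa using hL)
  have halg := hbasis.isAlgebraic
  rwa [Set.range_const] at halg

theorem isRationalPlace_of_trdeg_le_one [IsAlgClosed k] (hL : Algebra.trdeg k L ≤ 1)
    {v : AddValuation L (WithTop ℤ)} (hconst : ∀ c : k, c ≠ 0 → v (algebraMap k L c) = 0)
    {π : L} (hπ : v π = 1) :
    IsRationalPlace k v where
  map_algebraMap := hconst
  exists_uniformizer := ⟨π, hπ⟩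
  exists_residue f hf := by
    by_contra! hres
    -- `v` is then trivial on `k[f]`, hence on `L`, which is algebraic over `k[f]`.
    have hsub (c : k) : v (f - algebraMap k L c) = 0 :=
      (hres c).antisymm (v.map_le_sub hf (map_algebraMap_nonneg hconst c))
    have haeval (p : k[X]) (hp : p ≠ 0) : v (aeval f p) = 0 :=
      map_aeval_eq_zero_of_forall_map_sub hconst hsub hp
    have htrans : Transcendental k f := transcendental_iff.2 fun p hp => by_contra fun hp0 => by
      simpa [hp] using haeval p hp0
    have := isTrivialOn_adjoin_singleton haeval
    have := isAlgebraic_adjoin_singleton hL htrans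
    have hπ0 : π ≠ 0 := by rintro rfl; simp at hπ
    refine v.toValuation.transcendental_of_ne_one (A := Algebra.adjoin k {f}) π hπ0 (fun h => ?_)
      (Algebra.IsAlgebraic.isAlgebraic π)
    exact one_ne_zero (hπ.symm.trans h)

end

/-! ### Growth of power sums -/

section
variable {k L ι : Type*} [Field k] [CharZero k] [Field L] [Algebra k L]
  {v : AddValuation L (WithTop ℤ)} {s : Finset ι} {α : ι → L} {a : ι → L[X]}

theorem IsRationalPlace.exists_eventually_map_powerSum_le (hv : IsRationalPlace k v)
    (hα : ∀ i ∈ s, α i ≠ 0) (ha : ∀ i ∈ s, a i ≠ 0)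
    (hratio : (s : Set ι).Pairwise fun i j => α i / α j ∉ Set.range (algebraMap k L))
    {i : ι} (hi : i ∈ s) :
    ∃ c ≠ ⊤, ∀ᶠ n in atTop, v (powerSum s α a n) ≤ c + v (α i ^ n) := by
  obtain ⟨ψ, hψC, hψv⟩ := hv.exists_ringHom_laurentSeries
  have hratio' : (s : Set ι).Pairwise fun i j =>
      ψ (α i) / ψ (α j) ∉ Set.range (HahnSeries.C : k →+* k⸨X⸩) := fun i hi j hj hij ⟨c, hc⟩ =>
    hratio hi hj hij ⟨c, ψ.injective <| by rw [hψC, hc, map_div₀]⟩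
  have hupper := exists_eventually_addVal_powerSum_le (a := fun i => (a i).map ψ)
    (fun i hi => (map_ne_zero ψ).2 (hα i hi)) hratio'
    (fun i hi => (Polynomial.map_ne_zero_iff ψ.injective).2 (ha i hi)) hi
  simpa only [← map_powerSum, ← map_pow, hψv] using hupper

theorem stmt_8_general (hv : IsRationalPlace k v) (hs : s.Nonempty)
    (hα : ∀ i ∈ s, α i ≠ 0) (ha : ∀ i ∈ s, a i ≠ 0)
    (hratio : (s : Set ι).Pairwise fun i j => α i / α j ∉ Set.range (algebraMap k L)) :
    ∃ Cplus Cminus : ℤ, ∃ N : ℕ, ∀ n : ℕ, N ≤ n →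
      (Cminus : WithTop ℤ) + n • s.inf' hs (fun i => v (α i)) ≤ v (powerSum s α a n) ∧
      v (powerSum s α a n) ≤ (Cplus : WithTop ℤ) + n • s.inf' hs (fun i => v (α i)) := by
  obtain ⟨i, hi, hmin⟩ := s.exists_mem_eq_inf' hs fun i => v (α i)
  obtain ⟨Cminus, hCminus, hlower⟩ := exists_forall_add_nsmul_inf'_le_map_powerSum v hs α a
  obtain ⟨Cplus, hCplus, hupper⟩ := hv.exists_eventually_map_powerSum_le hα ha hratio hi
  obtain ⟨N, hN⟩ := eventually_atTop.1 hupper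
  lift Cminus to ℤ using hCminus
  lift Cplus to ℤ using hCplus
  refine ⟨Cplus, Cminus, N, fun n hn => ⟨hlower n, ?_⟩⟩
  rw [hmin, ← v.map_pow]
  exact hN n hn

end

namespace FFValuation
variable {F : Type*} [Field F] [Algebra ℂ F] (μ : FFValuation F)

/-- An `FFValuation` as an additive valuation in the sense of Mathlib. -/
def toAddValuation : AddValuation F (WithTop ℤ) :=
  .of μ.v μ.v_zero (by simpa using μ.v_const 1 one_ne_zero) μ.v_add μ.v_mul

theorem isRationalPlace_toAddValuation (hF : Algebra.trdeg ℂ F ≤ 1) :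
    IsRationalPlace ℂ μ.toAddValuation :=
  isRationalPlace_of_trdeg_le_one hF μ.v_const μ.v_exists_one.choose_spec

end FFValuation

theorem stmt_8
    -- the function field F ...
    (F : Type*) [Field F] [Algebra (RatFunc ℂ) F] (hFF : FunctionField ℂ F)
    -- ... and the splitting field L of the characteristic polynomial,
    -- a function field over ℂ containing F
    (L : Type*) [Field L] [Algebra ℂ L] [Algebra (RatFunc ℂ) L]
    [IsScalarTower ℂ (RatFunc ℂ) L] (hLFF : FunctionField ℂ L)
    [Algebra F L]
    (t : ℕ)
    -- the characteristic roots (in L) and the polynomial coefficients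
    (α : Fin (t + 1) → L) (A : Fin (t + 1) → Polynomial L)
    (hα0 : ∀ j, α j ≠ 0) (hA0 : ∀ j, A j ≠ 0)
    (hαinj : Function.Injective α)
    -- non-degeneracy
    (hGnd : ∀ i j, i ≠ j → ¬ IsConst L (α i / α j))
    -- L = F(α₁, …, α_t)
    (hgen : IntermediateField.adjoin F (Set.range α) = ⊤)
    -- the sequence takes values in F
    (G : ℕ → F)
    (hG : ∀ n : ℕ, algebraMap F L (G n) = ∑ j, (A j).eval (n : L) * α j ^ n)
    -- a valuation μ on L
    (μ : FFValuation L) :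
    ∃ Cplus Cminus : ℤ, ∃ N : ℕ, ∀ n : ℕ, N ≤ n →
      (Cminus : WithTop ℤ) + n • (Finset.univ.inf' Finset.univ_nonempty fun j => μ.v (α j))
          ≤ μ.v (algebraMap F L (G n)) ∧
      μ.v (algebraMap F L (G n))
          ≤ (Cplus : WithTop ℤ) + n • (Finset.univ.inf' Finset.univ_nonempty fun j => μ.v (α j)) := by
  have hμ := μ.isRationalPlace_toAddValuation (trdeg_eq_one_of_functionField ℂ L).le
  simp only [hG]
  exact stmt_8_general hμ Finset.univ_nonempty (fun j _ => hα0 j) (fun j _ => hA0 j)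
    fun i _ j _ hij => hGnd i j hij
end

section
/- Let $F$ be a function field in one variable over $\mathbb{C}$ of genus $\mathfrak{g}$, let $\gamma, \delta \in F \setminus \mathbb{C}$ be multiplicatively independent, and let $n, m$ be positive integers. Assume that $\mathcal{H}(\gamma^n / \delta^m) \le L$. Then there exists an effectively computable constant $L'$, depending only on $\gamma$, $\delta$, $\mathfrak{g}$ and $L$ (and not on $n, m$), such that $\max\{n, m\} \le L'$. -/
/-- The system of all valuations (places) of a function field `F/ℂ`,
together with the genus of `F`. -/
structure PlaceSystem (F : Type*) [Field F] [Algebra ℂ F] where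
  /-- index type for the places of `F/ℂ` -/
  ι : Type
  /-- the valuation attached to a place (junk value `0` at `f = 0`) -/
  v : ι → F → ℤ
  /-- the genus `𝔤` of `F` -/
  genus : ℕ
  v_zero : ∀ ν, v ν 0 = 0
  v_mul : ∀ ν, ∀ f g : F, f ≠ 0 → g ≠ 0 → v ν (f * g) = v ν f + v ν g
  v_add : ∀ ν, ∀ f g : F, f ≠ 0 → g ≠ 0 → f + g ≠ 0 →
    min (v ν f) (v ν g) ≤ v ν (f + g)
  v_const : ∀ ν, ∀ c : ℂ, v ν (algebraMap ℂ F c) = 0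
  v_exists_one : ∀ ν, ∃ f : F, f ≠ 0 ∧ v ν f = 1
  finite_support : ∀ f : F, f ≠ 0 → {ν | v ν f ≠ 0}.Finite
  sum_formula : ∀ f : F, f ≠ 0 → ∑ᶠ ν, v ν f = 0
  const_of_forall_zero : ∀ f : F, f ≠ 0 → (∀ ν, v ν f = 0) → IsConst F f

/-- The height `𝓗(f) = ∑_ν max {0, ν(f)}` of `f ∈ F*`. -/
noncomputable def PlaceSystem.height {F : Type*} [Field F] [Algebra ℂ F]
    (P : PlaceSystem F) (f : F) : ℤ :=
  ∑ᶠ ν, max 0 (P.v ν f)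
/-!
A multiplicative relation between `γ` and `δ` up to constants is a linear relation between their
divisors, so multiplicative independence yields two places at which the `2 × 2` matrix of
valuations of `γ` and `δ` has nonzero determinant. Every valuation of `γ ^ n / δ ^ m` is bounded in
absolute value by its height, because its zeros and poles have the same total degree. Cramer's rule
at the two places then bounds `n` and `m`, explicitly in terms of the four valuations and `L`.
-/

theorem abs_le_finsum_posPart_of_finsum_eq_zero {ι G : Type*} [AddCommGroup G] [Lattice G]
    [IsOrderedAddMonoid G] {f : ι → G} (hf : f.support.Finite) (hsum : ∑ᶠ i, f i = 0) (i : ι) :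
    |f i| ≤ ∑ᶠ j, (f j)⁺ := by
  have hpos : (fun j ↦ (f j)⁺).support.Finite :=
    hf.subset fun j hj hfj ↦ hj (by simp only [hfj, posPart_zero])
  have hneg : (fun j ↦ (f j)⁻).support.Finite :=
    hf.subset fun j hj hfj ↦ hj (by simp only [hfj, negPart_zero])
  have hbalance : ∑ᶠ j, (f j)⁺ = ∑ᶠ j, (f j)⁻ := by
    rw [← sub_eq_zero, ← finsum_sub_distrib hpos hneg]
    simpa only [posPart_sub_negPart] using hsum
  refine abs_le'.2 ⟨(le_posPart _).trans ?_, (neg_le_negPart _).trans ?_⟩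
  · exact single_le_finsum i hpos fun j ↦ posPart_nonneg _
  · rw [hbalance]
    exact single_le_finsum i hneg fun j ↦ negPart_nonneg _

theorem abs_mul_abs_det_le {R : Type*} [CommRing R] [LinearOrder R] [IsOrderedRing R]
    {a b c d x y B : R} (hab : |x * a - y * b| ≤ B) (hcd : |x * c - y * d| ≤ B) :
    |x| * |a * d - b * c| ≤ B * (|b| + |d|) :=
  calc |x| * |a * d - b * c|
      = |(x * a - y * b) * d - (x * c - y * d) * b| := by rw [← abs_mul]; ring_nf
    _ ≤ |x * a - y * b| * |d| + |x * c - y * d| * |b| := by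
        simpa only [abs_mul] using abs_sub ((x * a - y * b) * d) ((x * c - y * d) * b)
    _ ≤ B * |d| + B * |b| := by gcongr
    _ = B * (|b| + |d|) := by ring

section

variable {F : Type*} [Field F] [Algebra ℂ F] {γ δ : F}

namespace MultIndep

theorem symm (h : MultIndep F γ δ) : MultIndep F δ γ :=
  fun r s hrs ↦ (h s r (by rwa [mul_comm])).symm

theorem not_isConst_left (h : MultIndep F γ δ) : ¬ IsConst F γ := fun hγ ↦
  one_ne_zero (h 1 0 (by rwa [zpow_one, zpow_zero, mul_one])).1

theorem left_ne_zero (h : MultIndep F γ δ) : γ ≠ 0 := by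
  rintro rfl
  exact h.not_isConst_left ⟨0, map_zero _⟩

theorem right_ne_zero (h : MultIndep F γ δ) : δ ≠ 0 := h.symm.left_ne_zero

end MultIndep

namespace PlaceSystem

variable (P : PlaceSystem F)

/-- The valuation at `ν` as a homomorphism from the multiplicative group of `F`, written additively,
to `ℤ`; its values on powers and quotients are then instances of the general homomorphism laws. -/
def unitsValuation (ν : P.ι) : Additive Fˣ →+ ℤ :=
  AddMonoidHom.mk' (fun u ↦ P.v ν u.toMul) fun u w ↦ P.v_mul ν _ _ u.toMul.ne_zero w.toMul.ne_zero

theorem v_zpow (ν : P.ι) {f : F} (hf : f ≠ 0) (n : ℤ) : P.v ν (f ^ n) = n * P.v ν f := by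
  simpa [unitsValuation] using
    map_zsmul (P.unitsValuation ν) n (Additive.ofMul (Units.mk0 f hf))

theorem v_div (ν : P.ι) {f g : F} (hf : f ≠ 0) (hg : g ≠ 0) :
    P.v ν (f / g) = P.v ν f - P.v ν g := by
  simpa [unitsValuation] using
    map_sub (P.unitsValuation ν) (Additive.ofMul (Units.mk0 f hf)) (Additive.ofMul (Units.mk0 g hg))

theorem abs_v_le_height (ν : P.ι) {f : F} (hf : f ≠ 0) : |P.v ν f| ≤ P.height f := by
  simpa only [height, posPart_def, max_comm] using
    abs_le_finsum_posPart_of_finsum_eq_zero (P.finite_support f hf) (P.sum_formula f hf) ν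

theorem exists_v_det_ne_zero (h : MultIndep F γ δ) :
    ∃ ν μ, P.v ν γ * P.v μ δ - P.v ν δ * P.v μ γ ≠ 0 := by
  have hγ := h.left_ne_zero
  have hδ := h.right_ne_zero
  obtain ⟨ν, hν⟩ : ∃ ν, P.v ν γ ≠ 0 := by
    by_contra! hzero
    exact h.not_isConst_left (P.const_of_forall_zero γ hγ hzero)
  refine ⟨ν, ?_⟩
  by_contra! hdet
  have hconst : IsConst F (γ ^ (-P.v ν δ) * δ ^ P.v ν γ) :=
    P.const_of_forall_zero _ (mul_ne_zero (zpow_ne_zero _ hγ) (zpow_ne_zero _ hδ)) fun μ ↦ by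
      rw [P.v_mul μ _ _ (zpow_ne_zero _ hγ) (zpow_ne_zero _ hδ), P.v_zpow μ hγ, P.v_zpow μ hδ]
      linarith [hdet μ]
  exact hν (h _ _ hconst).2

theorem abs_exponents_le_of_height_le (hγ : γ ≠ 0) (hδ : δ ≠ 0) {ν μ : P.ι}
    (hdet : P.v ν γ * P.v μ δ - P.v ν δ * P.v μ γ ≠ 0) {n m L : ℤ}
    (hL : P.height (γ ^ n / δ ^ m) ≤ L) :
    |n| ≤ L * (|P.v ν δ| + |P.v μ δ|) ∧ |m| ≤ L * (|P.v ν γ| + |P.v μ γ|) := by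
  have hγn := zpow_ne_zero n hγ
  have hδm := zpow_ne_zero m hδ
  have hval (κ : P.ι) : |n * P.v κ γ - m * P.v κ δ| ≤ L := by
    rw [← P.v_zpow κ hγ, ← P.v_zpow κ hδ, ← P.v_div κ hγn hδm]
    exact (P.abs_v_le_height κ (div_ne_zero hγn hδm)).trans hL
  have hval' (κ : P.ι) : |m * P.v κ δ - n * P.v κ γ| ≤ L := (abs_sub_comm _ _).trans_le (hval κ)
  have hone := Int.one_le_abs hdet
  have hone' : 1 ≤ |P.v ν δ * P.v μ γ - P.v ν γ * P.v μ δ| := hone.trans_eq (abs_sub_comm _ _)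
  exact ⟨(le_mul_of_one_le_right (abs_nonneg n) hone).trans (abs_mul_abs_det_le (hval ν) (hval μ)),
    (le_mul_of_one_le_right (abs_nonneg m) hone').trans (abs_mul_abs_det_le (hval' ν) (hval' μ))⟩

end PlaceSystem

end

theorem stmt_9_general {F : Type*} [Field F] [Algebra ℂ F] (P : PlaceSystem F) {γ δ : F}
    (hindep : MultIndep F γ δ) (L : ℤ) :
    ∃ L' : ℕ, ∀ n m : ℤ, P.height (γ ^ n / δ ^ m) ≤ L → max n.natAbs m.natAbs ≤ L' := by
  obtain ⟨ν, μ, hdet⟩ := P.exists_v_det_ne_zero hindep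
  refine ⟨max (L * (|P.v ν δ| + |P.v μ δ|)).toNat (L * (|P.v ν γ| + |P.v μ γ|)).toNat,
    fun n m hL ↦ ?_⟩
  obtain ⟨hn, hm⟩ :=
    P.abs_exponents_le_of_height_le hindep.left_ne_zero hindep.right_ne_zero hdet hL
  rw [Int.abs_eq_natAbs] at hn hm
  exact max_le_max (by omega) (by omega)

theorem stmt_9
    (F : Type*) [Field F] [Algebra ℂ F] [Algebra (RatFunc ℂ) F]
    [IsScalarTower ℂ (RatFunc ℂ) F] (hFF : FunctionField ℂ F)
    (P : PlaceSystem F)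
    (γ δ : F) (hγ : ¬ IsConst F γ) (hδ : ¬ IsConst F δ)
    (hindep : MultIndep F γ δ)
    (L : ℤ) :
    ∃ L' : ℕ, ∀ n m : ℕ, 0 < n → 0 < m →
      P.height (γ ^ n / δ ^ m) ≤ L → max n m ≤ L' := by
  obtain ⟨L', hL'⟩ := stmt_9_general P hindep L
  exact ⟨L', fun n m _ _ hL ↦ by simpa using hL' n m (by simpa using hL)⟩
end
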